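/- arXiv:1509.02104 — 9 statements merged into one kernel-verified Lean document; each statement's English description precedes it below -/
import Mathlib

section
/- There is no finite group that has exactly two cyclic subgroups of order 6. -/
/-!
Let `A ≠ B` be the only two cyclic subgroups of squarefree order `n`. Conjugation permutes
`{A, B}`, so `A` and `B` normalize each other and `⁅x, y⁆ ∈ A ⊓ B` for generators `x` of `A` and
`y` of `B`. As `n` is squarefree, `k = |A ⊓ B|` is coprime to the index `[B : A ⊓ B]`; this forces
`⁅x, y⁆ = 1` and makes `u = y ^ k` generate a nontrivial complement of `A ⊓ B` in `B`. Then
`x * u` has order `n` and lies in neither `A` nor `B`, so it generates a third such subgroup.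
-/

open Subgroup
open scoped Pointwise commutatorElement

section

variable {G : Type*} [Group G] {A B : Subgroup G}

theorem isCyclic_and_card_eq_smul {α : Type*} [Group α] [MulDistribMulAction α G] (a : α)
    {H : Subgroup G} {n : ℕ} (hH : IsCyclic H ∧ Nat.card H = n) :
    IsCyclic ↥(a • H) ∧ Nat.card ↥(a • H) = n :=
  let e := equivSMul a H
  ⟨e.isCyclic.mp hH.1, (Nat.card_congr e.toEquiv).symm.trans hH.2⟩

theorem le_normalizer_of_conj_smul_mem_pair
    (h : ∀ g ∈ A, MulAut.conj g • B ∈ ({A, B} : Set (Subgroup G))) :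
    A ≤ normalizer (B : Set G) := by
  intro g hg
  suffices MulAut.conj g • B = B from mem_normalizer_iff_map_conj_eq.mpr this
  rcases h g hg with hgA | hgB
  · have hBA : B = A :=
      smul_left_cancel (MulAut.conj g) (hgA.trans (conj_smul_eq_self_of_mem hg).symm)
    rw [hgA, hBA]
  · exact hgB

theorem pow_natCard_eq_one_of_mem {x : G} (hx : x ∈ A) : x ^ Nat.card A = 1 :=
  orderOf_dvd_iff_pow_eq_one.mp (A.orderOf_dvd_natCard hx)

theorem commutatorElement_mem_inf_of_le_normalizer (hAB : A ≤ normalizer (B : Set G))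
    (hBA : B ≤ normalizer (A : Set G)) {x y : G} (hx : x ∈ A) (hy : y ∈ B) : ⁅x, y⁆ ∈ A ⊓ B :=
  ⟨le_normalizer_iff_commutator_le_left.mp hBA (commutator_mem_commutator hx hy),
    le_normalizer_iff_commutator_le_right.mp hAB (commutator_mem_commutator hx hy)⟩

theorem commutatorElement_pow_right_of_commute {x y : G} (h : Commute ⁅x, y⁆ y) (m : ℕ) :
    ⁅x, y ^ m⁆ = ⁅x, y⁆ ^ m := by
  have hconj : x * y * x⁻¹ = ⁅x, y⁆ * y := conj_eq_commutatorElement_mul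
  rw [commutatorElement_def, ← conj_pow, hconj, h.mul_pow, mul_inv_cancel_right]

theorem commute_of_le_normalizer_of_coprime [IsMulCommutative A] [IsMulCommutative B]
    (hAB : A ≤ normalizer (B : Set G)) (hBA : B ≤ normalizer (A : Set G))
    (hcop : (Nat.card ↥(A ⊓ B)).Coprime (A.relIndex B))
    {x y : G} (hx : x ∈ A) (hy : y ∈ B) : Commute x y := by
  have hmem : ⁅x, y⁆ ∈ A ⊓ B := commutatorElement_mem_inf_of_le_normalizer hAB hBA hx hy
  have hpow_mem : y ^ A.relIndex B ∈ A := (A.subgroupOf B).pow_index_mem ⟨y, hy⟩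
  have hpow_relIndex : ⁅x, y⁆ ^ A.relIndex B = 1 := by
    rw [← commutatorElement_pow_right_of_commute (setLike_mul_comm hmem.2 hy),
      commutatorElement_eq_one_iff_commute]
    exact setLike_mul_comm hx hpow_mem
  exact commutatorElement_eq_one_iff_commute.mp
    ((pow_eq_one_iff_of_coprime hcop).mp ⟨pow_natCard_eq_one_of_mem hmem, hpow_relIndex⟩)

theorem card_inf_mul_relIndex (A B : Subgroup G) :
    Nat.card ↥(A ⊓ B) * A.relIndex B = Nat.card B := by
  simpa using relIndex_inf_mul_relIndex ⊥ A B

theorem disjoint_zpowers_pow_card_inf (hcop : (Nat.card ↥(A ⊓ B)).Coprime (A.relIndex B))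
    {y : G} (hy : y ∈ B) : Disjoint A (zpowers (y ^ Nat.card ↥(A ⊓ B))) := by
  rw [disjoint_def]
  intro w hwA hw
  have hwB : w ∈ B := zpowers_le.mpr (pow_mem hy _) hw
  have hpow_relIndex : w ^ A.relIndex B = 1 := by
    refine orderOf_dvd_iff_pow_eq_one.mp ((orderOf_dvd_of_mem_zpowers hw).trans ?_)
    rw [orderOf_dvd_iff_pow_eq_one, ← pow_mul, card_inf_mul_relIndex]
    exact pow_natCard_eq_one_of_mem hy
  exact (pow_eq_one_iff_of_coprime hcop).mp
    ⟨pow_natCard_eq_one_of_mem (mem_inf.mpr ⟨hwA, hwB⟩), hpow_relIndex⟩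

theorem orderOf_mul_eq_lcm_of_disjoint_zpowers {x y : G} (hcomm : Commute x y)
    (hdisj : Disjoint (zpowers x) (zpowers y)) :
    orderOf (x * y) = (orderOf x).lcm (orderOf y) := by
  have hpow : x ^ orderOf (x * y) = 1 ∧ y ^ orderOf (x * y) = 1 :=
    disjoint_iff_mul_eq_one.mp hdisj (npow_mem_zpowers x _) (npow_mem_zpowers y _)
      (by rw [← hcomm.mul_pow, pow_orderOf_eq_one])
  exact Nat.dvd_antisymm hcomm.orderOf_mul_dvd_lcm
    (Nat.lcm_dvd (orderOf_dvd_of_pow_eq_one hpow.1) (orderOf_dvd_of_pow_eq_one hpow.2))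

theorem exists_mem_notMem_disjoint_zpowers_of_coprime [IsCyclic B] (hBA : ¬ B ≤ A)
    (hcop : (Nat.card ↥(A ⊓ B)).Coprime (A.relIndex B)) :
    ∃ u ∈ B, u ∉ A ∧ Disjoint A (zpowers u) := by
  obtain ⟨y, rfl⟩ := B.isCyclic_iff_exists_zpowers_eq_top.mp ‹_›
  have hy := mem_zpowers y
  have hdisj := disjoint_zpowers_pow_card_inf hcop hy
  refine ⟨_, pow_mem hy _, fun hmem ↦ hBA ?_, hdisj⟩
  have hpow : y ^ Nat.card ↥(A ⊓ zpowers y) = 1 :=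
    disjoint_def.mp hdisj hmem (mem_zpowers _)
  have hdvd : A.relIndex (zpowers y) ∣ Nat.card ↥(A ⊓ zpowers y) :=
    (A.relIndex_dvd_card _).trans (Nat.card_zpowers y ▸ orderOf_dvd_of_pow_eq_one hpow)
  exact relIndex_eq_one.mp (hcop.symm.eq_one_of_dvd hdvd)

theorem exists_isCyclic_card_eq_ne_ne_of_squarefree [IsCyclic A] [IsCyclic B] (hne : A ≠ B)
    (hcard : Nat.card A = Nat.card B) (hsq : Squarefree (Nat.card B))
    (hAB : A ≤ normalizer (B : Set G)) (hBA : B ≤ normalizer (A : Set G)) :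
    ∃ H : Subgroup G, IsCyclic H ∧ Nat.card H = Nat.card B ∧ H ≠ A ∧ H ≠ B := by
  have : Finite A := Nat.finite_of_card_ne_zero (hcard.trans_ne hsq.ne_zero)
  have : Finite B := Nat.finite_of_card_ne_zero hsq.ne_zero
  have hcop : (Nat.card ↥(A ⊓ B)).Coprime (A.relIndex B) :=
    Nat.coprime_of_squarefree_mul (by rwa [card_inf_mul_relIndex])
  have hnle : ¬ B ≤ A := fun hle ↦ hne (eq_of_le_of_card_ge hle hcard.le).symm
  obtain ⟨u, huB, huA, hdisj⟩ := exists_mem_notMem_disjoint_zpowers_of_coprime hnle hcop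
  obtain ⟨x, rfl⟩ := A.isCyclic_iff_exists_zpowers_eq_top.mp ‹_›
  have hx := mem_zpowers x
  have hcomm : Commute x u := commute_of_le_normalizer_of_coprime hAB hBA hcop hx huB
  have hdvd : orderOf u ∣ orderOf x := by
    rw [← Nat.card_zpowers x, hcard]
    exact B.orderOf_dvd_natCard huB
  have hmem : x * u ∈ zpowers (x * u) := mem_zpowers _
  refine ⟨zpowers (x * u), inferInstance, ?_, fun hA ↦ huA ?_, fun hB ↦ hne ?_⟩
  · rw [Nat.card_zpowers, orderOf_mul_eq_lcm_of_disjoint_zpowers hcomm hdisj,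
      Nat.lcm_eq_left hdvd, ← Nat.card_zpowers, hcard]
  · rwa [hA, mul_mem_cancel_left hx] at hmem
  · rw [hB, mul_mem_cancel_right huB] at hmem
    exact eq_of_le_of_card_ge (zpowers_le.mpr hmem) hcard.ge

theorem no_group_with_exactly_two_cyclic_subgroups_of_order_six_general {n : ℕ}
    (hn : Squarefree n) : {H : Subgroup G | IsCyclic H ∧ Nat.card H = n}.encard ≠ 2 := by
  intro h
  obtain ⟨A, B, hne, hpair⟩ := Set.encard_eq_two.mp h
  have hmem {H : Subgroup G} : IsCyclic H ∧ Nat.card H = n ↔ H = A ∨ H = B :=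
    Set.ext_iff.mp hpair H
  have hA := hmem.mpr (.inl rfl)
  have hB := hmem.mpr (.inr rfl)
  have hAB : A ≤ normalizer (B : Set G) := le_normalizer_of_conj_smul_mem_pair fun g _ ↦
    hmem.mp (isCyclic_and_card_eq_smul (MulAut.conj g) hB)
  have hBA : B ≤ normalizer (A : Set G) := le_normalizer_of_conj_smul_mem_pair fun g _ ↦
    (hmem.mp (isCyclic_and_card_eq_smul (MulAut.conj g) hA)).symm
  obtain ⟨hAcyc, rfl⟩ := hA
  obtain ⟨hBcyc, hcard⟩ := hB
  obtain ⟨H, hH, hHcard, hHA, hHB⟩ := exists_isCyclic_card_eq_ne_ne_of_squarefree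
    hne hcard.symm (hcard ▸ hn) hAB hBA
  exact (hmem.mp ⟨hH, hHcard.trans hcard⟩).elim hHA hHB

end

/-- There is no finite group that has exactly two cyclic subgroups of order 6. -/
theorem no_group_with_exactly_two_cyclic_subgroups_of_order_six :
    ∀ (G : Type) [Group G] [Finite G],
      {H : Subgroup G | IsCyclic H ∧ Nat.card H = 6}.ncard ≠ 2 := by
  intro G _ _ h
  have hsq : Squarefree 6 :=
    Nat.squarefree_mul_iff.mpr
      ⟨by decide, Nat.prime_two.squarefree, Nat.prime_three.squarefree⟩
  exact no_group_with_exactly_two_cyclic_subgroups_of_order_six_general hsq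
    ((ENat.toNat_eq_iff two_ne_zero).mp h)
end

section
/- No finite group of order 12, 18, or 36 has exactly four elements of order 6. -/
/-!
If a group had exactly four elements of order 6, they would be `a, a⁻¹, b, b⁻¹`, so conjugation by
`a`, which fixes `a` and `a⁻¹`, would send `b` to `b` or `b⁻¹`. Hence `a` commutes with the
involution `b ^ 3`, and `a ^ 2` commutes with `b`. If `a ^ 3 ≠ b ^ 3`, then `a * b ^ 3` is a fifth
element of order 6, since its cube is the third involution `a ^ 3 * b ^ 3`. If `a ^ 3 = b ^ 3`, then
`a` and `b` commute, and `a ^ 2` and `b ^ 2` generate an elementary abelian group of order 9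
commuting with this involution; now `a⁻¹ * b ^ 2` is a fifth element of order 6.
-/

theorem orderOf_eq_six_iff {M : Type*} [Monoid M] {x : M} :
    orderOf x = 6 ↔ x ^ 6 = 1 ∧ x ^ 2 ≠ 1 ∧ x ^ 3 ≠ 1 := by
  constructor
  · intro h
    exact ⟨h ▸ pow_orderOf_eq_one x, pow_ne_one_of_lt_orderOf two_ne_zero (by omega),
      pow_ne_one_of_lt_orderOf three_ne_zero (by omega)⟩
  · rintro ⟨h6, h2, h3⟩
    refine orderOf_eq_of_pow_and_pow_div_prime (by norm_num) h6 fun p hp hdvd ↦ ?_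
    obtain rfl | rfl : p = 2 ∨ p = 3 := by
      rwa [show 6 = 2 * 3 from rfl, hp.dvd_mul, Nat.prime_dvd_prime_iff_eq hp Nat.prime_two,
        Nat.prime_dvd_prime_iff_eq hp Nat.prime_three] at hdvd
    exacts [h3, h2]

theorem exists_eq_inv_pairs_of_encard_eq_four {α : Type*} [InvolutiveInv α] {S : Set α}
    (hinv : ∀ x ∈ S, x⁻¹ ∈ S) (hne : ∀ x ∈ S, x ≠ x⁻¹) (hS : S.encard = 4) :
    ∃ a ∈ S, ∃ b ∈ S, b ≠ a ∧ b ≠ a⁻¹ ∧ S = {a, a⁻¹, b, b⁻¹} := by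
  obtain ⟨a, ha⟩ : S.Nonempty := by
    rw [← Set.encard_ne_zero, hS]
    norm_num
  have hsub : {a, a⁻¹} ⊆ S := Set.pair_subset ha (hinv a ha)
  have hdiff : (S \ {a, a⁻¹}).encard = 2 := by
    have h := Set.encard_sdiff_add_encard_of_subset hsub
    rw [hS, Set.encard_pair (hne a ha), show (4 : ℕ∞) = 2 + 2 by norm_num] at h
    exact ENat.add_left_injective_of_ne_top (ENat.natCast_ne_top 2) h
  obtain ⟨b, hb, hba⟩ : (S \ {a, a⁻¹}).Nonempty := by
    rw [← Set.encard_ne_zero, hdiff]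
    norm_num
  simp only [Set.mem_insert_iff, Set.mem_singleton_iff, not_or] at hba
  have hpair : {b, b⁻¹} = S \ {a, a⁻¹} := by
    refine (Set.toFinite {b, b⁻¹}).eq_of_subset_of_encard_le ?_ ?_
    · refine Set.pair_subset ⟨hb, by simpa using hba⟩ ⟨hinv b hb, ?_⟩
      simpa [inv_eq_iff_eq_inv, and_comm] using hba
    · rw [hdiff, Set.encard_pair (hne b hb)]
  refine ⟨a, ha, b, hb, hba.1, hba.2, ?_⟩
  rw [← Set.union_sdiff_cancel hsub, ← hpair, Set.insert_union, Set.singleton_union]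

section Group

variable {G : Type*} [Group G] {a b : G}

theorem semiconjBy_self_or_inv_of_conj_mem (hba : b ≠ a) (hba' : b ≠ a⁻¹)
    (hconj : a * b * a⁻¹ ∈ ({a, a⁻¹, b, b⁻¹} : Set G)) :
    SemiconjBy a b b ∨ SemiconjBy a b b⁻¹ := by
  rcases hconj with h | h | h | h
  · exact absurd (mul_left_cancel (mul_inv_eq_iff_eq_mul.1 h)) hba
  · exact absurd (eq_inv_of_mul_eq_one_right (mul_eq_right.1 h)) hba'
  · exact .inl (mul_inv_eq_iff_eq_mul.1 h)
  · exact .inr (mul_inv_eq_iff_eq_mul.1 h)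

theorem commute_sq_of_semiconjBy_self_or_inv (h : SemiconjBy a b b ∨ SemiconjBy a b b⁻¹) :
    Commute (a ^ 2) b := by
  rw [pow_two]
  rcases h with h | h
  · exact h.mul_left h
  · exact SemiconjBy.mul_left (by simpa using h.inv_right) h

theorem commute_pow_of_semiconjBy_self_or_inv (h : SemiconjBy a b b ∨ SemiconjBy a b b⁻¹)
    {m : ℕ} (hm : b ^ (2 * m) = 1) : Commute a (b ^ m) := by
  have hinv : b⁻¹ ^ m = b ^ m := by
    rw [inv_pow, inv_eq_iff_mul_eq_one, ← pow_add, ← two_mul, hm]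
  rcases h with h | h
  · exact h.pow_right m
  · exact hinv ▸ h.pow_right m

theorem exists_orderOf_eq_six_of_cube_ne (ha : orderOf a = 6) (hb : orderOf b = 6)
    (hcomm : Commute a (b ^ 3)) (hcube : a ^ 3 ≠ b ^ 3) :
    ∃ g, orderOf g = 6 ∧ g ∉ ({a, a⁻¹, b, b⁻¹} : Set G) := by
  obtain ⟨ha6, ha2, ha3⟩ := orderOf_eq_six_iff.1 ha
  obtain ⟨hb6, -, hb3⟩ := orderOf_eq_six_iff.1 hb
  have inv_cube {x : G} (hx : x ^ 6 = 1) : x⁻¹ ^ 3 = x ^ 3 := by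
    rw [inv_pow, inv_eq_iff_mul_eq_one, ← pow_add, hx]
  have hg2 : (a * b ^ 3) ^ 2 = a ^ 2 := by rw [hcomm.mul_pow, ← pow_mul, hb6, mul_one]
  have hg3 : (a * b ^ 3) ^ 3 = a ^ 3 * b ^ 3 := by
    rw [hcomm.mul_pow, ← pow_mul, pow_add b 6 3, hb6, one_mul]
  refine ⟨a * b ^ 3, orderOf_eq_six_iff.2 ⟨?_, hg2 ▸ ha2, ?_⟩, ?_⟩
  · rw [pow_mul _ 2 3, hg2, ← pow_mul, ha6]
  · rwa [hg3, ne_eq, mul_eq_one_iff_eq_inv, ← inv_pow, inv_cube hb6]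
  · rintro (h | h | h | h) <;> rw [h] at hg3
    · exact hb3 (left_eq_mul.1 hg3)
    · exact hb3 (left_eq_mul.1 (inv_cube ha6 ▸ hg3))
    · exact ha3 (right_eq_mul.1 hg3)
    · exact ha3 (right_eq_mul.1 (inv_cube hb6 ▸ hg3))

theorem exists_orderOf_eq_six_of_cube_eq (ha : orderOf a = 6) (hb : orderOf b = 6)
    (hba : b ≠ a) (hba' : b ≠ a⁻¹) (hcomm : Commute a b) (hcube : a ^ 3 = b ^ 3) :
    ∃ g, orderOf g = 6 ∧ g ∉ ({a, a⁻¹, b, b⁻¹} : Set G) := by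
  obtain ⟨ha6, ha2, ha3⟩ := orderOf_eq_six_iff.1 ha
  obtain ⟨hb6, hb2, -⟩ := orderOf_eq_six_iff.1 hb
  have hcomm' : Commute a⁻¹ (b ^ 2) := (hcomm.pow_right 2).inv_left
  have hg2 : (a⁻¹ * b ^ 2) ^ 2 = (a ^ 2)⁻¹ * b ^ 4 := by rw [hcomm'.mul_pow, inv_pow, ← pow_mul]
  have hg3 : (a⁻¹ * b ^ 2) ^ 3 = (a ^ 3)⁻¹ := by
    rw [hcomm'.mul_pow, inv_pow, ← pow_mul, hb6, mul_one]
  refine ⟨a⁻¹ * b ^ 2, orderOf_eq_six_iff.2 ⟨?_, fun h ↦ hba' ?_, ?_⟩, ?_⟩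
  · rw [pow_mul _ 3 2, hg3, inv_pow, ← pow_mul, ha6, inv_one]
  · have hpow : a ^ 2 = b ^ 4 := inv_mul_eq_one.1 (hg2 ▸ h)
    refine eq_inv_of_mul_eq_one_right (mul_left_cancel (a := a ^ 5) ?_)
    calc a ^ 5 * (a * b) = a ^ 6 * b := by group
      _ = b ^ 4 * b ^ 3 := by rw [ha6, ← pow_add, pow_add b 6 1, hb6, pow_one]
      _ = a ^ 5 * 1 := by rw [← hpow, ← hcube, ← pow_add, mul_one]
  · rwa [hg3, inv_ne_one]
  · simp only [Set.mem_insert_iff, Set.mem_singleton_iff, inv_mul_eq_iff_eq_mul]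
    rintro (h | h | h | h)
    · refine hba (mul_left_cancel (a := b ^ 2) ?_)
      rw [← pow_succ, ← hcube, h, ← pow_two, pow_succ]
    · exact hb2 (h.trans (mul_inv_cancel a))
    · exact hba (mul_right_cancel (pow_two b ▸ h))
    · rw [eq_mul_inv_iff_mul_eq, ← pow_succ] at h
      exact ha2 (by rw [← h, ← pow_mul, hb6])

theorem exists_orderOf_eq_six_notMem_inv_pairs (ha : orderOf a = 6) (hb : orderOf b = 6)
    (hba : b ≠ a) (hba' : b ≠ a⁻¹) :
    ∃ g, orderOf g = 6 ∧ g ∉ ({a, a⁻¹, b, b⁻¹} : Set G) := by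
  by_cases hconj : a * b * a⁻¹ ∈ ({a, a⁻¹, b, b⁻¹} : Set G)
  · have hsemi := semiconjBy_self_or_inv_of_conj_mem hba hba' hconj
    by_cases hcube : a ^ 3 = b ^ 3
    · have hcomm3 : Commute (a ^ 3) b := hcube ▸ Commute.pow_self b 3
      have hcomm : Commute (a ^ 3 * (a ^ 2)⁻¹) b :=
        hcomm3.mul_left (commute_sq_of_semiconjBy_self_or_inv hsemi).inv_left
      rw [pow_succ', mul_inv_cancel_right] at hcomm
      exact exists_orderOf_eq_six_of_cube_eq ha hb hba hba' hcomm hcube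
    · exact exists_orderOf_eq_six_of_cube_ne ha hb
        (commute_pow_of_semiconjBy_self_or_inv hsemi (orderOf_eq_six_iff.1 hb).1) hcube
  · exact ⟨a * b * a⁻¹, ((MulAut.conj a).orderOf_eq b).trans hb, hconj⟩

end Group

theorem no_group_of_order_12_18_36_with_four_elements_of_order_six_general
    (G : Type*) [Group G] : {g : G | orderOf g = 6}.encard ≠ 4 := by
  intro hfour
  obtain ⟨a, ha, b, hb, hba, hba', hS⟩ := exists_eq_inv_pairs_of_encard_eq_four
    (fun g hg ↦ (orderOf_inv g).trans hg)
    (fun g hg h ↦ (orderOf_eq_six_iff.1 hg).2.1 (by rw [pow_two, mul_eq_one_iff_eq_inv, ← h]))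
    hfour
  obtain ⟨g, hg, hgmem⟩ := exists_orderOf_eq_six_notMem_inv_pairs ha hb hba hba'
  exact hgmem (hS ▸ hg)

/-- No finite group of order 12, 18, or 36 has exactly four elements of order 6. -/
theorem no_group_of_order_12_18_36_with_four_elements_of_order_six
    (G : Type) [Group G] [Finite G]
    (hcard : Nat.card G = 12 ∨ Nat.card G = 18 ∨ Nat.card G = 36) :
    {g : G | orderOf g = 6}.ncard ≠ 4 := fun h ↦
  no_group_of_order_12_18_36_with_four_elements_of_order_six_general G <| by
    rw [← (Set.toFinite _).cast_ncard_eq, h, Nat.cast_ofNat]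
end

section
/- Let G be a finite group with π_e(G) ⊆ {1,2,3,4,6} which has exactly three cyclic subgroups of order 6. If there exist two cyclic subgroups of order 6 of G whose intersection has order 3, then the intersection of any two distinct cyclic subgroups of order 6 of G has order 3. -/
/-!
Let `c` generate the intersection of the two given cyclic subgroups `H` and `K` of order `2 * n`,
with `n` odd. A cyclic subgroup of order `2 * n` containing `c` is `⟨a * c⟩` for a unique
involution `a` of the centralizer of `c`. So `H` and `K` give two distinct involutions there, and
two distinct involutions always produce a third one in the subgroup they generate, which in turn
yields a third cyclic subgroup through `c`. If there are only three, all of them contain `c`, and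
distinct ones cannot share more than `⟨c⟩`, which has index two in each.
-/

section

variable {G : Type*} [Group G]

theorem mem_zpowers_mul_of_coprime {a c : G} (hac : Commute a c)
    (hcop : (orderOf c).Coprime (orderOf a)) : a ∈ Subgroup.zpowers (a * c) := by
  have hpow : (a * c) ^ orderOf c = a ^ orderOf c := by
    rw [hac.mul_pow, pow_orderOf_eq_one, mul_one]
  have ha : a ∈ Subgroup.zpowers ((a * c) ^ orderOf c) := by
    rwa [hpow, mem_zpowers_pow_iff]
  exact Subgroup.zpowers_le_of_mem (Subgroup.npow_mem_zpowers _ _) ha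

theorem mem_zpowers_of_mem_zpowers_mul_of_coprime {a c x : G} (hac : Commute a c)
    (hcop : (orderOf c).Coprime (orderOf x)) (hx : x ∈ Subgroup.zpowers (a * c)) :
    x ∈ Subgroup.zpowers a := by
  obtain ⟨k, rfl⟩ := hx
  have hpow : ((a * c) ^ k) ^ orderOf c = (a ^ k) ^ orderOf c := by
    rw [hac.mul_zpow, (hac.zpow_zpow k k).mul_pow, ← zpow_natCast (c ^ k), zpow_comm,
      zpow_natCast c, pow_orderOf_eq_one, one_zpow, mul_one]
  have hmem := mem_zpowers_pow_iff.mpr hcop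
  rw [hpow] at hmem
  exact Subgroup.zpowers_le_of_mem
    (Subgroup.pow_mem _ (Subgroup.zpow_mem_zpowers a k) _) hmem

theorem eq_of_mem_zpowers_of_orderOf_eq_two {a b : G} (ha : orderOf a = 2) (hb : orderOf b = 2)
    (hmem : b ∈ Subgroup.zpowers a) : b = a := by
  obtain ⟨k, rfl⟩ := hmem
  have hne : a ^ k ≠ 1 := (orderOf_eq_prime_iff.mp hb).2
  change a ^ k = a
  rw [← zpow_mod_orderOf, ha] at hne ⊢
  rcases Int.emod_two_eq_zero_or_one k with hk | hk <;> simp_all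

theorem eq_of_zpowers_mul_eq_zpowers_mul {a b c : G} (hac : Commute a c) (hbc : Commute b c)
    (ha : orderOf a = 2) (hb : orderOf b = 2) (hc : Odd (orderOf c))
    (h : Subgroup.zpowers (a * c) = Subgroup.zpowers (b * c)) : a = b := by
  have hcop : (orderOf c).Coprime (orderOf a) := ha ▸ hc.coprime_two_right
  have hmem : a ∈ Subgroup.zpowers (b * c) := h ▸ mem_zpowers_mul_of_coprime hac hcop
  exact eq_of_mem_zpowers_of_orderOf_eq_two hb ha
    (mem_zpowers_of_mem_zpowers_mul_of_coprime hbc hcop hmem)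

theorem exists_zpowers_mul_eq_of_isCyclic {H : Subgroup G} [IsCyclic H] [Finite H] {m : ℕ} {c : G}
    (hc : c ∈ H) (hcard : Nat.card H = m * orderOf c) (hcop : m.Coprime (orderOf c)) :
    ∃ a, orderOf a = m ∧ Commute a c ∧ Subgroup.zpowers (a * c) = H := by
  obtain ⟨a, ha⟩ := IsCyclic.exists_ofOrder_eq_natCard (α := H)
  have hfin : orderOf c ≠ 0 := right_ne_zero_of_mul (hcard ▸ Nat.card_pos.ne')
  set b := a ^ orderOf c with hb
  have hborder : orderOf (b : G) = m := by
    rw [Subgroup.orderOf_coe, hb, orderOf_pow_of_dvd hfin (ha ▸ hcard ▸ dvd_mul_left _ _), ha,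
      hcard, Nat.mul_div_cancel _ (Nat.pos_of_ne_zero hfin)]
  have hbc : Commute (b : G) c :=
    setLike_mul_comm b.2 hc
  refine ⟨b, hborder, hbc, Subgroup.eq_of_le_of_card_ge ?_ ?_⟩
  · exact Subgroup.zpowers_le_of_mem (H.mul_mem b.2 hc)
  · rw [Nat.card_zpowers, hbc.orderOf_mul_eq_mul_orderOf_of_coprime (by rwa [hborder]), hborder,
      hcard]

theorem exists_third_orderOf_eq_two_mem_closure {a b : G} (ha : orderOf a = 2)
    (hb : orderOf b = 2) (hab : a ≠ b) :
    ∃ d ∈ Subgroup.closure {a, b}, orderOf d = 2 ∧ d ≠ a ∧ d ≠ b := by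
  obtain ⟨ha2, ha1⟩ := orderOf_eq_prime_iff.mp ha
  obtain ⟨hb2, hb1⟩ := orderOf_eq_prime_iff.mp hb
  have ha_mem : a ∈ Subgroup.closure {a, b} := Subgroup.subset_closure (by simp)
  have hb_mem : b ∈ Subgroup.closure {a, b} := Subgroup.subset_closure (by simp)
  by_cases hcomm : Commute a b
  · have hmul : a * b ≠ 1 := fun h =>
      hab (mul_right_cancel (h.trans ((sq b).symm.trans hb2).symm))
    refine ⟨a * b, mul_mem ha_mem hb_mem, orderOf_eq_prime_iff.mpr ⟨?_, hmul⟩, ?_, ?_⟩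
    · rw [hcomm.mul_pow, ha2, hb2, one_mul]
    · simpa using hb1
    · simpa using ha1
  · refine ⟨a * b * a⁻¹, mul_mem (mul_mem ha_mem hb_mem) (inv_mem ha_mem), ?_, ?_, ?_⟩
    · rw [← hb]
      exact (SemiconjBy.conj_mk a b).orderOf_eq.symm
    · simpa [mul_inv_eq_iff_eq_mul] using hab.symm
    · exact fun h => hcomm (mul_inv_eq_iff_eq_mul.mp h)

theorem exists_third_isCyclic_of_mem {c : G} (hc : Odd (orderOf c)) {H K : Subgroup G}
    (hH : IsCyclic H ∧ Nat.card H = 2 * orderOf c) (hK : IsCyclic K ∧ Nat.card K = 2 * orderOf c)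
    (hHK : H ≠ K) (hcH : c ∈ H) (hcK : c ∈ K) :
    ∃ L : Subgroup G, (IsCyclic L ∧ Nat.card L = 2 * orderOf c) ∧ c ∈ L ∧ L ≠ H ∧ L ≠ K := by
  obtain ⟨_, hHcard⟩ := hH
  obtain ⟨_, hKcard⟩ := hK
  have : Finite H := Nat.finite_of_card_ne_zero (hHcard ▸ mul_ne_zero two_ne_zero hc.pos.ne')
  have : Finite K := Nat.finite_of_card_ne_zero (hKcard ▸ mul_ne_zero two_ne_zero hc.pos.ne')
  obtain ⟨a, ha, hac, rfl⟩ := exists_zpowers_mul_eq_of_isCyclic hcH hHcard hc.coprime_two_left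
  obtain ⟨b, hb, hbc, rfl⟩ := exists_zpowers_mul_eq_of_isCyclic hcK hKcard hc.coprime_two_left
  obtain ⟨d, hd_mem, hd, hda, hdb⟩ :=
    exists_third_orderOf_eq_two_mem_closure ha hb fun h => hHK (by rw [h])
  have hdc : Commute d c := by
    have hle : Subgroup.closure {a, b} ≤ Subgroup.centralizer {c} := by
      simp [Subgroup.closure_le, Set.insert_subset_iff, Subgroup.mem_centralizer_singleton_iff,
        hac.eq, hbc.eq]
    exact Subgroup.mem_centralizer_singleton_iff.mp (hle hd_mem)
  have hcop : (orderOf d).Coprime (orderOf c) := hd ▸ hc.coprime_two_left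
  refine ⟨Subgroup.zpowers (d * c), ⟨inferInstance, ?_⟩, ?_, ?_, ?_⟩
  · rw [Nat.card_zpowers, hdc.orderOf_mul_eq_mul_orderOf_of_coprime hcop, hd]
  · exact hdc.eq ▸ mem_zpowers_mul_of_coprime hdc.symm hcop
  · exact fun h => hda (eq_of_zpowers_mul_eq_zpowers_mul hdc hac hd ha hc h)
  · exact fun h => hdb (eq_of_zpowers_mul_eq_zpowers_mul hdc hbc hd hb hc h)

theorem card_inf_eq_of_ne_of_card_eq_prime_mul {p n : ℕ} (hp : p.Prime) (hn : n ≠ 0)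
    {H K : Subgroup G} (hH : Nat.card H = p * n) (hK : Nat.card K = p * n) (hHK : H ≠ K)
    (hdvd : n ∣ Nat.card (H ⊓ K : Subgroup G)) : Nat.card (H ⊓ K : Subgroup G) = n := by
  have : Finite H := Nat.finite_of_card_ne_zero (hH ▸ mul_ne_zero hp.ne_zero hn)
  have : Finite K := Nat.finite_of_card_ne_zero (hK ▸ mul_ne_zero hp.ne_zero hn)
  obtain ⟨k, hk⟩ := hdvd
  have hkp : k ∣ p := by
    have hle := Subgroup.card_dvd_of_le (inf_le_left : H ⊓ K ≤ H)
    rw [hk, hH, mul_comm p] at hle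
    exact Nat.dvd_of_mul_dvd_mul_left (Nat.pos_of_ne_zero hn) hle
  rcases (Nat.dvd_prime hp).mp hkp with rfl | rfl
  · rw [hk, mul_one]
  · rw [mul_comm] at hk
    have hinf_H : H ⊓ K = H := Subgroup.eq_of_le_of_card_ge inf_le_left (hH.trans hk.symm).le
    have hinf_K : H ⊓ K = K := Subgroup.eq_of_le_of_card_ge inf_le_right (hK.trans hk.symm).le
    exact absurd (hinf_H.symm.trans hinf_K) hHK

theorem exists_mem_of_isCyclic_of_ncard_eq_three {n : ℕ} (hn : Odd n)
    (hthree : {H : Subgroup G | IsCyclic H ∧ Nat.card H = 2 * n}.ncard = 3)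
    {H K : Subgroup G} (hH : IsCyclic H ∧ Nat.card H = 2 * n)
    (hK : IsCyclic K ∧ Nat.card K = 2 * n) (hHK : H ≠ K)
    (hinf : Nat.card (H ⊓ K : Subgroup G) = n) :
    ∃ c : G, orderOf c = n ∧
      ∀ M : Subgroup G, IsCyclic M → Nat.card M = 2 * n → c ∈ M := by
  obtain ⟨c, hc_mem, rfl⟩ : ∃ c ∈ H ⊓ K, orderOf c = n := by
    have := hH.1
    have := Subgroup.isCyclic_of_le (inf_le_left : H ⊓ K ≤ H)
    obtain ⟨c, hc⟩ := IsCyclic.exists_ofOrder_eq_natCard (α := (H ⊓ K : Subgroup G))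
    exact ⟨c, c.2, by rw [Subgroup.orderOf_coe, hc, hinf]⟩
  obtain ⟨L, hL, hcL, hLH, hLK⟩ := exists_third_isCyclic_of_mem hn hH hK hHK hc_mem.1 hc_mem.2
  have hall : {H, K, L} = {M : Subgroup G | IsCyclic M ∧ Nat.card M = 2 * orderOf c} := by
    refine Set.eq_of_subset_of_ncard_le ?_ ?_ (Set.finite_of_ncard_ne_zero (by simp [hthree]))
    · rintro M (rfl | rfl | rfl)
      exacts [hH, hK, hL]
    · rw [hthree, Set.ncard_eq_three.mpr ⟨H, K, L, hHK, hLH.symm, hLK.symm, rfl⟩]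
  refine ⟨c, rfl, fun M hM hMcard => ?_⟩
  have hM_mem : M ∈ ({H, K, L} : Set (Subgroup G)) := hall ▸ ⟨hM, hMcard⟩
  rcases hM_mem with rfl | rfl | rfl
  exacts [hc_mem.1, hc_mem.2, hcL]

theorem intersections_of_cyclic_subgroups_of_order_six_general {n : ℕ} (hn : Odd n)
    (hthree : {H : Subgroup G | IsCyclic H ∧ Nat.card H = 2 * n}.ncard = 3)
    (hexists : ∃ H K : Subgroup G, IsCyclic H ∧ Nat.card H = 2 * n ∧ IsCyclic K ∧
      Nat.card K = 2 * n ∧ H ≠ K ∧ Nat.card (H ⊓ K : Subgroup G) = n) :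
    ∀ H K : Subgroup G, IsCyclic H → Nat.card H = 2 * n → IsCyclic K → Nat.card K = 2 * n →
      H ≠ K → Nat.card (H ⊓ K : Subgroup G) = n := by
  obtain ⟨H, K, hH, hHcard, hK, hKcard, hHK, hinf⟩ := hexists
  obtain ⟨c, hc, hc_mem⟩ := exists_mem_of_isCyclic_of_ncard_eq_three hn hthree ⟨hH, hHcard⟩
    ⟨hK, hKcard⟩ hHK hinf
  intro M N hM hMcard hN hNcard hMN
  refine card_inf_eq_of_ne_of_card_eq_prime_mul Nat.prime_two hn.pos.ne' hMcard hNcard hMN ?_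
  rw [← hc]
  exact Subgroup.orderOf_dvd_natCard _ ⟨hc_mem M hM hMcard, hc_mem N hN hNcard⟩

end

/-- Let `G` be a finite group with `π_e(G) ⊆ {1,2,3,4,6}` which has exactly three cyclic
subgroups of order 6. If there exist two cyclic subgroups of order 6 of `G` whose
intersection has order 3, then the intersection of any two distinct cyclic subgroups of
order 6 of `G` has order 3. -/
theorem intersections_of_cyclic_subgroups_of_order_six
    (G : Type) [Group G] [Finite G]
    (horders : ∀ g : G, orderOf g ∈ ({1, 2, 3, 4, 6} : Set ℕ))
    (hthree : {H : Subgroup G | IsCyclic H ∧ Nat.card H = 6}.ncard = 3)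
    (hexists : ∃ H K : Subgroup G, IsCyclic H ∧ Nat.card H = 6 ∧ IsCyclic K ∧
      Nat.card K = 6 ∧ H ≠ K ∧ Nat.card (H ⊓ K : Subgroup G) = 3) :
    ∀ H K : Subgroup G, IsCyclic H → Nat.card H = 6 → IsCyclic K → Nat.card K = 6 →
      H ≠ K → Nat.card (H ⊓ K : Subgroup G) = 3 := by
  exact intersections_of_cyclic_subgroups_of_order_six_general (n := 3) (by decide) hthree hexists
end

section
/- Each of the five groups Z_2 × Z_6, Z_3 × S_3, Z_2 × Dic_3 (Dic_3 the dicyclic group of order 12), Z_2 × Z_2 × S_3, and Z_3 × A_4 satisfies all of the following: its set of element orders is contained in {1,2,3,4,6}; it has exactly three cyclic subgroups of order 6; and there exist two of its cyclic subgroups of order 6 whose intersection has order 3. -/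
/-- A group has the property of interest if its element orders lie in `{1,2,3,4,6}`,
it has exactly three cyclic subgroups of order 6, and two of its cyclic subgroups of
order 6 intersect in a subgroup of order 3. -/
def HasThreeCyclicSixProperty (G : Type*) [Group G] : Prop :=
  (∀ g : G, orderOf g ∈ ({1, 2, 3, 4, 6} : Set ℕ)) ∧
  {H : Subgroup G | IsCyclic H ∧ Nat.card H = 6}.ncard = 3 ∧
  ∃ H K : Subgroup G, IsCyclic H ∧ Nat.card H = 6 ∧ IsCyclic K ∧
    Nat.card K = 6 ∧ H ≠ K ∧ Nat.card (H ⊓ K : Subgroup G) = 3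

/-! If `z` has odd order `m`, then `t ↦ ⟨z * t⟩` is a bijection from the involutions commuting with
`z` to the cyclic subgroups of order `2 * m` containing `z`: the involution is recovered as
`t = (z * t) ^ m`. Each of the five groups has an element `z` of order 3 which lies in all cyclic
subgroups of order 6 and commutes with exactly three involutions; any two of the resulting three
subgroups then meet in `⟨z⟩`.

For `C × S`, with `|C| = 3` and `S` one of `S_3`, `A_4`, the element `z` generates `C`. The other
three groups have the form `E × D` with `|E| = 2`, and `z` lies in the factor `D`, where it commutes
with exactly one involution. -/

open Subgroup

section PrimeIndex

variable {G : Type*} [Group G]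

theorem inf_eq_of_relIndex_prime {P H K : Subgroup G} (hPH : P ≤ H) (hPK : P ≤ K)
    (hH : (P.relIndex H).Prime) (hK : (P.relIndex K).Prime) (hne : H ≠ K) : H ⊓ K = P := by
  have hP : P ≤ H ⊓ K := le_inf hPH hPK
  by_contra hinf
  have hP_index : P.relIndex (H ⊓ K) ≠ 1 := fun h =>
    hinf (le_antisymm (relIndex_eq_one.mp h) hP)
  have le_of_prime {L : Subgroup G} (hL : (P.relIndex L).Prime) (hle : H ⊓ K ≤ L) :
      L ≤ H ⊓ K := by
    rw [← relIndex_mul_relIndex P (H ⊓ K) L hP hle, Nat.prime_mul_iff] at hL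
    exact relIndex_eq_one.mp (hL.resolve_right fun h => hP_index h.2).2
  exact hne (le_antisymm ((le_of_prime hH inf_le_left).trans inf_le_right)
    ((le_of_prime hK inf_le_right).trans inf_le_left))

theorem relIndex_eq_of_card_eq_mul {P H : Subgroup G} {n : ℕ} (hPH : P ≤ H)
    (hP : Nat.card P ≠ 0) (hH : Nat.card H = n * Nat.card P) : P.relIndex H = n := by
  have hmul := relIndex_mul_relIndex ⊥ P H bot_le hPH
  rw [relIndex_bot_left, relIndex_bot_left, hH, mul_comm n] at hmul
  exact Nat.eq_of_mul_eq_mul_left (Nat.pos_of_ne_zero hP) hmul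

end PrimeIndex

section OrderTwoMul

variable {G : Type*} [Group G] {z t : G}

theorem eq_of_mem_zpowers_of_orderOf_eq_two_s5 {s : G} (ht : orderOf t = 2) (hs : orderOf s = 2)
    (hmem : s ∈ zpowers t) : s = t := by
  obtain ⟨k, rfl⟩ := mem_zpowers_iff.mp hmem
  have ht_sq : t ^ (2 : ℤ) = 1 := by exact_mod_cast ht ▸ pow_orderOf_eq_one t
  obtain ⟨j, rfl | rfl⟩ := Int.even_or_odd' k
  · rw [zpow_mul, ht_sq, one_zpow, orderOf_one] at hs
    omega
  · rw [zpow_add, zpow_mul, ht_sq, one_zpow, one_mul, zpow_one]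

theorem orderOf_mul_of_orderOf_eq_two (hz : Odd (orderOf z)) (ht : orderOf t = 2)
    (hzt : Commute z t) : orderOf (z * t) = 2 * orderOf z := by
  rw [hzt.orderOf_mul_eq_mul_orderOf_of_coprime (ht ▸ hz.coprime_two_right), ht, mul_comm]

theorem mul_pow_orderOf_of_orderOf_eq_two (hz : Odd (orderOf z)) (ht : orderOf t = 2)
    (hzt : Commute z t) : (z * t) ^ orderOf z = t := by
  rw [hzt.mul_pow, pow_orderOf_eq_one, one_mul, ← pow_mod_orderOf, ht, Nat.odd_iff.mp hz, pow_one]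

theorem right_mem_zpowers_mul (hz : Odd (orderOf z)) (ht : orderOf t = 2) (hzt : Commute z t) :
    t ∈ zpowers (z * t) := by
  simpa only [mul_pow_orderOf_of_orderOf_eq_two hz ht hzt] using
    npow_mem_zpowers (z * t) (orderOf z)

theorem left_mem_zpowers_mul (hz : Odd (orderOf z)) (ht : orderOf t = 2) (hzt : Commute z t) :
    z ∈ zpowers (z * t) :=
  ((zpowers (z * t)).mul_mem_cancel_right (right_mem_zpowers_mul hz ht hzt)).mp
    (mem_zpowers (z * t))

theorem injOn_zpowers_mul (hz : Odd (orderOf z)) :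
    Set.InjOn (fun t => zpowers (z * t)) {t | orderOf t = 2 ∧ Commute z t} := by
  rintro t ⟨ht, hzt⟩ s ⟨hs, hzs⟩ (heq : zpowers (z * t) = zpowers (z * s))
  have hs_mem : s ∈ zpowers (z * t) := heq ▸ right_mem_zpowers_mul hz hs hzs
  obtain ⟨k, hk⟩ := mem_zpowers_iff.mp hs_mem
  have hs_eq : s = t ^ k := calc
    s = s ^ orderOf z := by rw [← pow_mod_orderOf, hs, Nat.odd_iff.mp hz, pow_one]
    _ = ((z * t) ^ orderOf z) ^ k := by rw [← hk, ← zpow_natCast, ← zpow_natCast, zpow_comm]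
    _ = t ^ k := by rw [mul_pow_orderOf_of_orderOf_eq_two hz ht hzt]
  exact (eq_of_mem_zpowers_of_orderOf_eq_two_s5 ht hs (mem_zpowers_iff.mpr ⟨k, hs_eq.symm⟩)).symm

theorem exists_zpowers_mul_eq_of_isCyclic_s5 (hz : Odd (orderOf z)) {H : Subgroup G}
    (hcyc : IsCyclic H) (hcard : Nat.card H = 2 * orderOf z) (hzH : z ∈ H) :
    ∃ t, (orderOf t = 2 ∧ Commute z t) ∧ zpowers (z * t) = H := by
  obtain ⟨g, rfl⟩ := H.isCyclic_iff_exists_zpowers_eq_top.mp hcyc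
  rw [Nat.card_zpowers] at hcard
  have horder : orderOf (g ^ orderOf z) = 2 := by
    rw [orderOf_pow_of_dvd hz.pos.ne' (hcard ▸ dvd_mul_left _ _), hcard,
      Nat.mul_div_cancel _ hz.pos]
  have hcomm : Commute z (g ^ orderOf z) := by
    obtain ⟨k, rfl⟩ := mem_zpowers_iff.mp hzH
    exact ((Commute.refl g).zpow_left k).pow_right _
  have : Finite (zpowers g) :=
    Nat.finite_of_card_ne_zero (by have := hz.pos; rw [Nat.card_zpowers]; omega)
  refine ⟨g ^ orderOf z, ⟨horder, hcomm⟩, eq_of_le_of_card_ge ?_ ?_⟩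
  · exact zpowers_le.mpr (mul_mem hzH (npow_mem_zpowers g _))
  · rw [Nat.card_zpowers, Nat.card_zpowers, hcard, orderOf_mul_of_orderOf_eq_two hz horder hcomm]

theorem image_zpowers_mul (hz : Odd (orderOf z)) :
    (fun t => zpowers (z * t)) '' {t | orderOf t = 2 ∧ Commute z t} =
      {H : Subgroup G | IsCyclic H ∧ Nat.card H = 2 * orderOf z ∧ z ∈ H} := by
  ext H
  constructor
  · rintro ⟨t, ⟨ht, hzt⟩, rfl⟩
    exact ⟨inferInstance, by rw [Nat.card_zpowers, orderOf_mul_of_orderOf_eq_two hz ht hzt],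
      left_mem_zpowers_mul hz ht hzt⟩
  · rintro ⟨hcyc, hcard, hzH⟩
    exact exists_zpowers_mul_eq_of_isCyclic_s5 hz hcyc hcard hzH

theorem ncard_isCyclic_of_mem_eq_ncard_orderOf_eq_two (hz : Odd (orderOf z)) :
    {H : Subgroup G | IsCyclic H ∧ Nat.card H = 2 * orderOf z ∧ z ∈ H}.ncard =
      {t | orderOf t = 2 ∧ Commute z t}.ncard := by
  rw [← image_zpowers_mul hz, (injOn_zpowers_mul hz).ncard_image]

theorem ncard_orderOf_eq_two_and_commute (z : G) :
    {t | orderOf t = 2 ∧ Commute z t}.ncard = {t | t ^ 2 = 1 ∧ Commute z t}.ncard - 1 := by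
  have hset : {t | orderOf t = 2 ∧ Commute z t} = {t | t ^ 2 = 1 ∧ Commute z t} \ {1} := by
    ext t
    simp only [orderOf_eq_prime_iff, Set.mem_sdiff, Set.mem_ofPred_eq, Set.mem_singleton_iff]
    tauto
  have hone : (1 : G) ∈ {t | t ^ 2 = 1 ∧ Commute z t} := ⟨one_pow 2, Commute.one_right z⟩
  rw [hset, Set.ncard_sdiff_singleton_of_mem hone]

theorem inf_eq_zpowers_of_card_eq_two_mul (hz : orderOf z ≠ 0) {H K : Subgroup G}
    (hH : Nat.card H = 2 * orderOf z) (hK : Nat.card K = 2 * orderOf z)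
    (hzH : z ∈ H) (hzK : z ∈ K) (hne : H ≠ K) : H ⊓ K = zpowers z := by
  rw [← Nat.card_zpowers] at hz hH hK
  have hzH := zpowers_le.mpr hzH
  have hzK := zpowers_le.mpr hzK
  refine inf_eq_of_relIndex_prime hzH hzK ?_ ?_ hne
  · exact relIndex_eq_of_card_eq_mul hzH hz hH ▸ Nat.prime_two
  · exact relIndex_eq_of_card_eq_mul hzK hz hK ▸ Nat.prime_two

theorem mem_zpowers_of_sq_mem_zpowers (hz : orderOf z ≠ 0) {g : G}
    (hg : orderOf g = 2 * orderOf z) (hsq : g ^ 2 ∈ zpowers z) : z ∈ zpowers g := by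
  have hsq_order : orderOf (g ^ 2) = orderOf z := by
    rw [orderOf_pow_of_dvd two_ne_zero (hg ▸ dvd_mul_right _ _), hg,
      Nat.mul_div_cancel_left _ two_pos]
  have : Finite (zpowers z) := Nat.finite_of_card_ne_zero (by rwa [Nat.card_zpowers])
  have heq : zpowers (g ^ 2) = zpowers z :=
    eq_of_le_of_card_ge (zpowers_le.mpr hsq) (by rw [Nat.card_zpowers, Nat.card_zpowers, hsq_order])
  exact zpowers_le.mpr (npow_mem_zpowers g 2) (heq ▸ mem_zpowers z)

end OrderTwoMul

theorem orderOf_mem_of_pow_four_or_pow_six {G : Type*} [Group G] {g : G}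
    (hg : g ^ 4 = 1 ∨ g ^ 6 = 1) : orderOf g ∈ ({1, 2, 3, 4, 6} : Set ℕ) := by
  have hdvd : orderOf g ∈ Nat.divisors 4 ∪ Nat.divisors 6 := by
    simpa [orderOf_dvd_iff_pow_eq_one] using hg
  rw [show Nat.divisors 4 ∪ Nat.divisors 6 = {1, 2, 3, 4, 6} by decide] at hdvd
  simpa using hdvd

namespace HasThreeCyclicSixProperty

/-- Counting the solutions of `t ^ 2 = 1`, rather than involutions, makes the count multiplicative
in direct products. -/
theorem of_sq_mem_zpowers {G : Type*} [Group G] {z : G} (hz : orderOf z = 3)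
    (hpow : ∀ g : G, g ^ 3 = 1 ∨ g ^ 4 = 1 ∨ g ^ 2 ∈ zpowers z)
    (hcount : {t | t ^ 2 = 1 ∧ Commute z t}.ncard = 4) : HasThreeCyclicSixProperty G := by
  have hodd : Odd (orderOf z) := hz ▸ by decide
  have z_mem {H : Subgroup G} (hcyc : IsCyclic H) (hcard : Nat.card H = 6) : z ∈ H := by
    obtain ⟨g, rfl⟩ := H.isCyclic_iff_exists_zpowers_eq_top.mp hcyc
    rw [Nat.card_zpowers] at hcard
    have h3 : g ^ 3 ≠ 1 := pow_ne_one_of_lt_orderOf (by decide) (by omega)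
    have h4 : g ^ 4 ≠ 1 := pow_ne_one_of_lt_orderOf (by decide) (by omega)
    exact mem_zpowers_of_sq_mem_zpowers hodd.pos.ne' (by omega)
      (((hpow g).resolve_left h3).resolve_left h4)
  have hthree : {H : Subgroup G | IsCyclic H ∧ Nat.card H = 6}.ncard = 3 := by
    have h := ncard_isCyclic_of_mem_eq_ncard_orderOf_eq_two hodd
    rw [ncard_orderOf_eq_two_and_commute, hcount, hz] at h
    convert h using 3
    exact Set.ext fun H => ⟨fun hH => ⟨hH.1, hH.2, z_mem hH.1 hH.2⟩, fun hH => ⟨hH.1, hH.2.1⟩⟩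
  refine ⟨fun g => orderOf_mem_of_pow_four_or_pow_six ?_, hthree, ?_⟩
  · rcases hpow g with h | h | h
    · exact .inr (by rw [pow_mul g 3 2, h, one_pow])
    · exact .inl h
    · have hdvd : orderOf (g ^ 2) ∣ 3 := hz ▸ orderOf_dvd_of_mem_zpowers h
      exact .inr (by rw [pow_mul g 2 3, orderOf_dvd_iff_pow_eq_one.mp hdvd])
  · obtain ⟨H, K, ⟨hH, hH6⟩, ⟨hK, hK6⟩, hne⟩ :=
      (Set.one_lt_ncard_iff (Set.finite_of_ncard_pos (by rw [hthree]; decide))).mp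
        (by rw [hthree]; decide)
    have hinf : H ⊓ K = zpowers z := inf_eq_zpowers_of_card_eq_two_mul hodd.pos.ne'
      (by omega) (by omega) (z_mem hH hH6) (z_mem hK hK6) hne
    exact ⟨H, K, hH, hH6, hK, hK6, hne, by rw [hinf, Nat.card_zpowers, hz]⟩

theorem prod_of_card_eq_three {C S : Type*} [Group C] [Group S] (hC : Nat.card C = 3)
    (hpow : ∀ s : S, s ^ 2 = 1 ∨ s ^ 3 = 1) (hcount : {s : S | s ^ 2 = 1}.ncard = 4) :
    HasThreeCyclicSixProperty (C × S) := by
  have : Fact (Nat.Prime 3) := ⟨Nat.prime_three⟩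
  have := isCyclic_of_prime_card hC
  obtain ⟨ω, hω⟩ := IsCyclic.exists_generator (α := C)
  have hcube (x : C) : x ^ 3 = 1 := hC ▸ pow_card_eq_one'
  refine of_sq_mem_zpowers (z := (ω, 1)) ?_ ?_ ?_
  · rw [Prod.orderOf_mk, orderOf_one, Nat.lcm_one_right,
      orderOf_eq_card_of_forall_mem_zpowers hω, hC]
  · rintro ⟨x, s⟩
    rcases hpow s with hs | hs
    · obtain ⟨k, hk⟩ := mem_zpowers_iff.mp (hω (x ^ 2))
      exact .inr (.inr (mem_zpowers_iff.mpr ⟨k, Prod.ext hk (by simp [hs])⟩))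
    · exact .inl (Prod.ext (hcube x) hs)
  · have hset : {t : C × S | t ^ 2 = 1 ∧ Commute (ω, 1) t} = {1} ×ˢ {s | s ^ 2 = 1} := by
      ext ⟨x, s⟩
      have hcomm : Commute ω x := by
        obtain ⟨k, rfl⟩ := mem_zpowers_iff.mp (hω x)
        exact (Commute.refl ω).zpow_right k
      have hx : x ^ 2 = 1 ↔ x = 1 :=
        ⟨fun h => by simpa [pow_succ _ 2, h] using hcube x, fun h => by rw [h, one_pow]⟩
      simp [Prod.commute_iff, Prod.ext_iff, hcomm, hx]
    rw [hset, Set.ncard_prod, Set.ncard_singleton, hcount]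

theorem prod_of_card_eq_two {E D : Type*} [Group E] [Group D] (hE : Nat.card E = 2) {w : D}
    (hw : orderOf w = 3) (hpow : ∀ d : D, d ^ 4 = 1 ∨ d ^ 2 = w ∨ d ^ 2 = w⁻¹)
    (hcount : {d | d ^ 2 = 1 ∧ Commute w d}.ncard = 2) : HasThreeCyclicSixProperty (E × D) := by
  have hsq (e : E) : e ^ 2 = 1 := hE ▸ pow_card_eq_one'
  refine of_sq_mem_zpowers (z := (1, w)) ?_ ?_ ?_
  · rw [Prod.orderOf_mk, orderOf_one, Nat.lcm_one_left, hw]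
  · rintro ⟨e, d⟩
    rcases hpow d with hd | hd | hd
    · exact .inr (.inl (Prod.ext (by simp [pow_mul e 2 2, hsq]) hd))
    · exact .inr (.inr (mem_zpowers_iff.mpr ⟨1, Prod.ext (by simp [hsq]) (by simp [hd])⟩))
    · exact .inr (.inr (mem_zpowers_iff.mpr ⟨-1, Prod.ext (by simp [hsq]) (by simp [hd])⟩))
  · have hset : {t : E × D | t ^ 2 = 1 ∧ Commute (1, w) t} =
        Set.univ ×ˢ {d | d ^ 2 = 1 ∧ Commute w d} := by
      ext ⟨e, d⟩
      simp [Prod.commute_iff, Prod.ext_iff, hsq]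
    rw [hset, Set.ncard_prod, Set.ncard_univ, hE, hcount]

end HasThreeCyclicSixProperty

/-- Each of the five groups `Z_2 × Z_6`, `Z_3 × S_3`, `Z_2 × Dic_3`, `Z_2 × Z_2 × S_3`
and `Z_3 × A_4` has element orders contained in `{1,2,3,4,6}`, exactly three cyclic
subgroups of order 6, and two cyclic subgroups of order 6 intersecting in a subgroup
of order 3. -/
theorem five_groups_have_three_cyclic_subgroups_of_order_six :
    HasThreeCyclicSixProperty (Multiplicative (ZMod 2) × Multiplicative (ZMod 6)) ∧
    HasThreeCyclicSixProperty (Multiplicative (ZMod 3) × Equiv.Perm (Fin 3)) ∧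
    HasThreeCyclicSixProperty (Multiplicative (ZMod 2) × QuaternionGroup 3) ∧
    HasThreeCyclicSixProperty
      (Multiplicative (ZMod 2) × Multiplicative (ZMod 2) × Equiv.Perm (Fin 3)) ∧
    HasThreeCyclicSixProperty (Multiplicative (ZMod 3) × alternatingGroup (Fin 4)) := by
  refine ⟨?_, ?_, ?_, ?_, ?_⟩
  · exact .prod_of_card_eq_two (w := .ofAdd 2) (hE := by simp)
      (hw := orderOf_eq_prime (by decide) (by decide)) (hpow := by decide)
      (hcount := by simp only [commute_iff_eq, Set.ncard_eq_toFinset_card']; decide)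
  · exact .prod_of_card_eq_three (hC := by simp) (hpow := by decide)
      (hcount := by rw [Set.ncard_eq_toFinset_card']; decide)
  · exact .prod_of_card_eq_two (w := .a 2) (hE := by simp)
      (hw := orderOf_eq_prime (by decide) (by decide)) (hpow := by decide)
      (hcount := by simp only [commute_iff_eq, Set.ncard_eq_toFinset_card']; decide)
  · exact .prod_of_card_eq_two (w := (1, finRotate 3)) (hE := by simp)
      (hw := orderOf_eq_prime (by decide) (by decide)) (hpow := by decide)
      (hcount := by simp only [commute_iff_eq, Set.ncard_eq_toFinset_card']; decide)
  · exact .prod_of_card_eq_three (hC := by simp) (hpow := by decide)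
      (hcount := by rw [Set.ncard_eq_toFinset_card']; decide)
end

section
/- Let G be a finite group with π_e(G) ⊆ {1,2,3,4,6} whose cyclic subgroups of order 6 are exactly the three subgroups ⟨a⟩, ⟨b⟩, ⟨c⟩, where a, b, c have order 6 and a² = b² = c². If both a² and a³ lie in the center Z(G), then G is isomorphic to Z_2 × Z_6. -/
/-! Multiplication by the central element `a ^ 2` of order 3 would turn an element of order 4 into
one of order 12, so `G` has exponent 6. If `g` has prime order `p ∈ {2, 3}` and does not lie in
`⟨a⟩`, then the `p` subgroups `⟨a * x⟩` with `x ∈ ⟨g⟩`, together with `⟨a ^ p * g⟩`, are distinct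
cyclic subgroups of order 6 of `⟨a⟩ × ⟨g⟩`. As there are only three in `G`, this is absurd for
`p = 3`, so all squares lie in `⟨a⟩`; and for `p = 2` every element of order 6 lies in `⟨a⟩ × ⟨g⟩`.
An involution `g ∉ ⟨a⟩` exists because `⟨a⟩` is not the only cyclic subgroup of order 6, and
multiplying the cube of any element by `a ^ 2` then gives `G = ⟨a⟩ × ⟨g⟩`. -/

section CyclicSubgroups

open Subgroup

variable {G : Type*} [Group G] {a g : G}

/-- The cyclic subgroups of order `n` of a group `G`; for `n = 0` these are the infinite cyclic
subgroups, since `Nat.card` is zero on infinite types. -/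
def cyclicSubgroups (G : Type*) [Group G] (n : ℕ) : Set (Subgroup G) :=
  {H | IsCyclic H ∧ Nat.card H = n}

theorem zpowers_mem_cyclicSubgroups (x : G) : zpowers x ∈ cyclicSubgroups G (orderOf x) :=
  ⟨inferInstance, Nat.card_zpowers x⟩

theorem zpowers_eq_zpowers_of_mem (hg : IsOfFinOrder g) (hord : orderOf a = orderOf g)
    (hmem : a ∈ zpowers g) : zpowers a = zpowers g := by
  have : Finite (zpowers g) := finite_zpowers.2 hg
  exact eq_of_le_of_card_ge (zpowers_le.2 hmem) (by simp only [Nat.card_zpowers, hord, le_refl])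

theorem disjoint_zpowers_of_prime_orderOf {H : Subgroup G} (hg : (orderOf g).Prime) (hgH : g ∉ H) :
    Disjoint H (zpowers g) := by
  have : Fact (Nat.card (zpowers g)).Prime := ⟨by rwa [Nat.card_zpowers]⟩
  rw [← subgroupOf_eq_bot]
  exact ((H.subgroupOf (zpowers g)).eq_bot_or_eq_top_of_prime_card).resolve_right
    fun h => hgH (zpowers_le.1 (subgroupOf_eq_top.1 h))

theorem eq_and_eq_of_mul_eq_mul_of_disjoint {H K : Subgroup G} (hHK : Disjoint H K) {x x' y y' : G}
    (hx : x ∈ H) (hx' : x' ∈ H) (hy : y ∈ K) (hy' : y' ∈ K) (h : x * y = x' * y') :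
    x = x' ∧ y = y' := by
  have hpair := mul_injective_of_disjoint hHK
    (a₁ := (⟨x, hx⟩, ⟨y, hy⟩)) (a₂ := (⟨x', hx'⟩, ⟨y', hy'⟩)) h
  simpa only [Prod.mk.injEq, Subtype.mk.injEq] using hpair

theorem orderOf_mul_eq_left_of_disjoint_zpowers (hcomm : Commute a g)
    (hdisj : Disjoint (zpowers a) (zpowers g)) (hdvd : orderOf g ∣ orderOf a) :
    orderOf (a * g) = orderOf a := by
  refine Nat.dvd_antisymm ?_ (orderOf_dvd_of_pow_eq_one ?_)
  · simpa only [Nat.lcm_eq_left hdvd] using hcomm.orderOf_mul_dvd_lcm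
  · have h : a ^ orderOf (a * g) * g ^ orderOf (a * g) = 1 * 1 := by
      rw [← hcomm.mul_pow, pow_orderOf_eq_one, one_mul]
    exact (eq_and_eq_of_mul_eq_mul_of_disjoint hdisj (npow_mem_zpowers a _) (one_mem _)
      (npow_mem_zpowers g _) (one_mem _) h).1

theorem eq_of_mul_mem_zpowers_mul {K : Subgroup G} (haK : Disjoint (zpowers a) K) {x y : G}
    (hx : x ∈ K) (hy : y ∈ K) (hcomm : Commute a x) (hdvd : orderOf x ∣ orderOf a)
    (h : a * y ∈ zpowers (a * x)) : y = x := by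
  obtain ⟨k, hk : (a * x) ^ k = a * y⟩ := h
  rw [hcomm.mul_zpow] at hk
  obtain ⟨hak, hxk⟩ := eq_and_eq_of_mul_eq_mul_of_disjoint haK (zpow_mem_zpowers a k)
    (mem_zpowers a) (zpow_mem hx k) hy hk
  have hmod : k ≡ 1 [ZMOD orderOf a] := zpow_eq_zpow_iff_modEq.1 (hak.trans (zpow_one a).symm)
  rw [← hxk, zpow_eq_zpow_iff_modEq.2 (hmod.of_dvd (Int.natCast_dvd_natCast.2 hdvd)), zpow_one]

theorem mul_notMem_zpowers_pow_mul {K : Subgroup G} (haK : Disjoint (zpowers a) K) {x y : G}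
    (hx : x ∈ K) (hy : y ∈ K) (hcomm : Commute a x) {n : ℕ} (hn : ¬ n.Coprime (orderOf a)) :
    a * y ∉ zpowers (a ^ n * x) := by
  rintro ⟨k, hk : (a ^ n * x) ^ k = a * y⟩
  rw [(hcomm.pow_left n).mul_zpow] at hk
  have hank : (a ^ n) ^ k = a := (eq_and_eq_of_mul_eq_mul_of_disjoint haK
    (zpow_mem (npow_mem_zpowers a n) k) (mem_zpowers a) (zpow_mem hx k) hy hk).1
  exact hn (mem_zpowers_pow_iff.1 ⟨k, hank⟩)

theorem orderOf_pow_orderOf_mul (hcomm : Commute a g) (hg : orderOf g ≠ 0) {k : ℕ}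
    (ha : orderOf a = orderOf g * k) (hcop : (orderOf g).Coprime k) :
    orderOf (a ^ orderOf g * g) = orderOf a := by
  have hpow : orderOf (a ^ orderOf g) = k := by
    rw [orderOf_pow_of_dvd hg ⟨k, ha⟩, ha, Nat.mul_div_cancel_left k hg.pos]
  rw [(hcomm.pow_left _).orderOf_mul_eq_mul_orderOf_of_coprime (by rwa [hpow, Nat.coprime_comm]),
    hpow, ha, mul_comm]

theorem orderOf_add_one_le_encard_cyclicSubgroups (hcomm : Commute a g)
    (hdisj : Disjoint (zpowers a) (zpowers g)) (hg : 1 < orderOf g) {k : ℕ}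
    (ha : orderOf a = orderOf g * k) (hcop : (orderOf g).Coprime k) :
    (orderOf g + 1 : ℕ∞) ≤
      (cyclicSubgroups G (orderOf a) ∩ Set.Iic (zpowers a ⊔ zpowers g)).encard := by
  have hdvd : orderOf g ∣ orderOf a := ⟨k, ha⟩
  have hcomm' (x : zpowers g) : Commute a x := by
    obtain ⟨_, j, rfl⟩ := x
    exact hcomm.zpow_right j
  have hdvd' (x : zpowers g) : orderOf (x : G) ∣ orderOf a :=
    (orderOf_dvd_of_mem_zpowers x.2).trans hdvd
  let f : zpowers g → Subgroup G := fun x => zpowers (a * x)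
  have hf : f.Injective := fun x y hxy =>
    Subtype.ext (eq_of_mul_mem_zpowers_mul hdisj y.2 x.2 (hcomm' y) (hdvd' y)
      (zpowers_le.1 hxy.le))
  have hnotMem : zpowers (a ^ orderOf g * g) ∉ Set.range f := by
    rintro ⟨x, hx⟩
    refine mul_notMem_zpowers_pow_mul hdisj (mem_zpowers g) x.2 hcomm ?_ (zpowers_le.1 hx.le)
    exact fun h => hg.ne' (Nat.Coprime.eq_one_of_dvd h hdvd)
  have hcard : (insert (zpowers (a ^ orderOf g * g)) (Set.range f)).encard = orderOf g + 1 := by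
    have : Finite (zpowers g) := Nat.finite_of_card_ne_zero (by rw [Nat.card_zpowers]; lia)
    rw [Set.encard_insert_of_notMem hnotMem, ← Set.image_univ, hf.encard_image, Set.encard_univ,
      ENat.card_eq_coe_natCard, Nat.card_zpowers]
  rw [← hcard]
  refine Set.encard_le_encard
    (Set.insert_subset ⟨?_, ?_⟩ (Set.range_subset_iff.2 fun x => ⟨?_, ?_⟩))
  · exact orderOf_pow_orderOf_mul hcomm (by lia) ha hcop ▸ zpowers_mem_cyclicSubgroups _
  · exact zpowers_le.2 (mul_mem_sup (npow_mem_zpowers a _) (mem_zpowers g))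
  · have hx := orderOf_mul_eq_left_of_disjoint_zpowers (hcomm' x)
      (hdisj.mono_right (zpowers_le.2 x.2)) (hdvd' x)
    exact hx ▸ zpowers_mem_cyclicSubgroups _
  · exact zpowers_le.2 (mul_mem_sup (mem_zpowers a) x.2)

theorem mem_zpowers_of_encard_cyclicSubgroups_le (hcomm : Commute a g) (hg : (orderOf g).Prime)
    {k : ℕ} (ha : orderOf a = orderOf g * k) (hcop : (orderOf g).Coprime k)
    (hcard : (cyclicSubgroups G (orderOf a)).encard ≤ orderOf g) : g ∈ zpowers a := by
  by_contra hga
  have hle := (orderOf_add_one_le_encard_cyclicSubgroups hcomm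
    (disjoint_zpowers_of_prime_orderOf hg hga) hg.one_lt ha hcop).trans
    ((Set.encard_le_encard Set.inter_subset_left).trans hcard)
  norm_cast at hle
  lia

theorem le_zpowers_sup_zpowers_of_encard_cyclicSubgroups_le (hcomm : Commute a g)
    (hdisj : Disjoint (zpowers a) (zpowers g)) (hg : 1 < orderOf g) {k : ℕ}
    (ha : orderOf a = orderOf g * k) (hcop : (orderOf g).Coprime k)
    (hcard : (cyclicSubgroups G (orderOf a)).encard ≤ orderOf g + 1) {H : Subgroup G}
    (hH : H ∈ cyclicSubgroups G (orderOf a)) : H ≤ zpowers a ⊔ zpowers g := by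
  have hfin : (cyclicSubgroups G (orderOf a)).Finite :=
    Set.finite_of_encard_le_coe (k := orderOf g + 1) (by exact_mod_cast hcard)
  have heq := (hfin.inter_of_left _).eq_of_subset_of_encard_le Set.inter_subset_left
    (hcard.trans (orderOf_add_one_le_encard_cyclicSubgroups hcomm hdisj hg ha hcop))
  exact Set.inter_eq_left.1 heq hH

theorem nonempty_mulEquiv_prod_zmod (hcomm : Commute a g)
    (hdisj : Disjoint (zpowers a) (zpowers g)) (htop : zpowers a ⊔ zpowers g = ⊤) :
    Nonempty (G ≃* Multiplicative (ZMod (orderOf a)) × Multiplicative (ZMod (orderOf g))) := by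
  have hcomm' (x : zpowers a) (y : zpowers g) :
      Commute ((zpowers a).subtype x) ((zpowers g).subtype y) := by
    obtain ⟨⟨_, i, rfl⟩, ⟨_, j, rfl⟩⟩ := x, y
    exact hcomm.zpow_zpow i j
  let f := MonoidHom.noncommCoprod _ _ hcomm'
  have hinj : Function.Injective f := by
    rw [MonoidHom.noncommCoprod_injective, range_subtype, range_subtype]
    exact ⟨subtype_injective _, subtype_injective _, hdisj⟩
  have hsurj : Function.Surjective f := by
    rw [← MonoidHom.range_eq_top, MonoidHom.noncommCoprod_range, range_subtype, range_subtype, htop]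
  rw [← Nat.card_zpowers a, ← Nat.card_zpowers g]
  exact ⟨(MulEquiv.ofBijective f ⟨hinj, hsurj⟩).symm.trans
    ((zmodCyclicMulEquiv inferInstance).symm.prodCongr (zmodCyclicMulEquiv inferInstance).symm)⟩

end CyclicSubgroups

section OrderSix

open Subgroup

variable {G : Type*} [Group G] {a g : G} {K : Subgroup G}

theorem mem_of_sq_mem_of_cube_mem (h2 : g ^ 2 ∈ K) (h3 : g ^ 3 ∈ K) : g ∈ K := by
  have h : g = g ^ 3 * (g ^ 2)⁻¹ := by group
  exact h ▸ mul_mem h3 (inv_mem h2)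

theorem pow_six_eq_one_of_commute (horders : ∀ x : G, orderOf x ∈ ({1, 2, 3, 4, 6} : Set ℕ))
    (ha : orderOf a = 3) (hcomm : Commute g a) : g ^ 6 = 1 := by
  have hg4 : orderOf g ≠ 4 := by
    intro hg
    have h12 : orderOf (g * a) = 12 := by
      rw [hcomm.orderOf_mul_eq_mul_orderOf_of_coprime (by norm_num [ha, hg]), ha, hg]
    simpa [h12] using horders (g * a)
  rw [← orderOf_dvd_iff_pow_eq_one]
  obtain h | h | h | h | h : orderOf g = 1 ∨ orderOf g = 2 ∨ orderOf g = 3 ∨ orderOf g = 4 ∨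
    orderOf g = 6 := horders g
  case inr.inr.inr.inl => exact absurd h hg4
  all_goals norm_num [h]

theorem mem_of_forall_orderOf_eq_six_mem (ha : orderOf a = 6) (hcomm : Commute g a)
    (hK : ∀ x : G, orderOf x = 6 → x ∈ K) (hg : g ^ 6 = 1) (hg2 : g ^ 2 ∈ K) : g ∈ K := by
  refine mem_of_sq_mem_of_cube_mem hg2 ?_
  by_cases hg3 : g ^ 3 = 1
  · exact hg3 ▸ one_mem K
  have hord3 : orderOf (g ^ 3) = 2 := orderOf_eq_prime (by rw [← pow_mul, hg]) hg3
  have hord2 : orderOf (a ^ 2) = 3 := by rw [orderOf_pow_of_dvd two_ne_zero] <;> norm_num [ha]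
  have hord6 : orderOf (g ^ 3 * a ^ 2) = 6 := by
    rw [(hcomm.pow_pow 3 2).orderOf_mul_eq_mul_orderOf_of_coprime (by norm_num [hord2, hord3]),
      hord2, hord3]
  exact (mul_mem_cancel_right (pow_mem (hK a ha) 2)).1 (hK _ hord6)

theorem sq_mem_zpowers_of_encard_cyclicSubgroups_le (ha : orderOf a = 6) (hcomm : Commute g a)
    (hcard : (cyclicSubgroups G 6).encard ≤ 3) (hg : g ^ 6 = 1) : g ^ 2 ∈ zpowers a := by
  by_cases hg2 : g ^ 2 = 1
  · exact hg2 ▸ one_mem _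
  have hord : orderOf (g ^ 2) = 3 := orderOf_eq_prime (by rw [← pow_mul, hg]) hg2
  exact mem_zpowers_of_encard_cyclicSubgroups_le (k := 2) (hcomm.symm.pow_right 2)
    (hord ▸ Nat.prime_three) (by rw [ha, hord]) (by norm_num [hord]) (by rwa [ha, hord])

theorem exists_orderOf_eq_two_notMem_zpowers (ha : orderOf a = 6)
    (hcard : 1 < (cyclicSubgroups G 6).encard)
    (hsq : ∀ x : G, orderOf x = 6 → x ^ 2 ∈ zpowers a) :
    ∃ t : G, orderOf t = 2 ∧ t ∉ zpowers a := by
  obtain ⟨H, ⟨hcyc, hH⟩, hHa⟩ := Set.exists_ne_of_one_lt_encard hcard (zpowers a)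
  obtain ⟨b, rfl⟩ := (Subgroup.isCyclic_iff_exists_zpowers_eq_top H).1 hcyc
  have hb : orderOf b = 6 := by rwa [Nat.card_zpowers] at hH
  refine ⟨b ^ 3, by rw [orderOf_pow_of_dvd three_ne_zero] <;> norm_num [hb], fun hb3 => hHa ?_⟩
  exact zpowers_eq_zpowers_of_mem (orderOf_pos_iff.1 (by lia)) (hb.trans ha.symm)
    (mem_of_sq_mem_of_cube_mem (hsq b hb) hb3)

theorem iso_Z2_times_Z6_of_central_powers_general
    (horders : ∀ x : G, orderOf x ∈ ({1, 2, 3, 4, 6} : Set ℕ)) (ha : orderOf a = 6)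
    (hcard : (cyclicSubgroups G 6).encard = 3) (haZ : a ∈ center G) :
    Nonempty (G ≃* Multiplicative (ZMod 2) × Multiplicative (ZMod 6)) := by
  have hcomm (x : G) : Commute x a := mem_center_iff.1 haZ x
  have hpow (x : G) : x ^ 6 = 1 := by
    have hord : orderOf (a ^ 2) = 3 := by rw [orderOf_pow_of_dvd two_ne_zero] <;> norm_num [ha]
    exact pow_six_eq_one_of_commute horders hord ((hcomm x).pow_right 2)
  have hsq (x : G) : x ^ 2 ∈ zpowers a :=
    sq_mem_zpowers_of_encard_cyclicSubgroups_le ha (hcomm x) hcard.le (hpow x)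
  obtain ⟨t, ht, hta⟩ := exists_orderOf_eq_two_notMem_zpowers ha (by norm_num [hcard])
    fun x _ => hsq x
  have hdisj := disjoint_zpowers_of_prime_orderOf (ht ▸ Nat.prime_two) hta
  have hsix (x : G) (hx : orderOf x = 6) : x ∈ zpowers a ⊔ zpowers t :=
    zpowers_le.1 <| le_zpowers_sup_zpowers_of_encard_cyclicSubgroups_le (k := 3) (hcomm t).symm
      hdisj (by lia) (by rw [ha, ht]) (by norm_num [ht]) (by rw [ha, ht, hcard]; norm_num)
      (ha ▸ hx ▸ zpowers_mem_cyclicSubgroups x)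
  have htop : zpowers a ⊔ zpowers t = ⊤ := eq_top_iff.2 fun x _ =>
    mem_of_forall_orderOf_eq_six_mem ha (hcomm x) hsix (hpow x) (mem_sup_left (hsq x))
  obtain ⟨e⟩ := nonempty_mulEquiv_prod_zmod (hcomm t).symm hdisj htop
  rw [ha, ht] at e
  exact ⟨e.trans MulEquiv.prodComm⟩

end OrderSix

/-- Let `G` be a finite group with `π_e(G) ⊆ {1,2,3,4,6}` whose cyclic subgroups of
order 6 are exactly `⟨a⟩, ⟨b⟩, ⟨c⟩`, where `a, b, c` have order 6 and `a² = b² = c²`.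
If both `a²` and `a³` lie in the center of `G`, then `G ≅ Z_2 × Z_6`. -/
theorem iso_Z2_times_Z6_of_central_powers
    (G : Type) [Group G] [Finite G] (a b c : G)
    (horders : ∀ g : G, orderOf g ∈ ({1, 2, 3, 4, 6} : Set ℕ))
    (ha : orderOf a = 6) (hb : orderOf b = 6) (hc : orderOf c = 6)
    (hab : Subgroup.zpowers a ≠ Subgroup.zpowers b)
    (hac : Subgroup.zpowers a ≠ Subgroup.zpowers c)
    (hbc : Subgroup.zpowers b ≠ Subgroup.zpowers c)
    (hset : {H : Subgroup G | IsCyclic H ∧ Nat.card H = 6} =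
      {Subgroup.zpowers a, Subgroup.zpowers b, Subgroup.zpowers c})
    (hsq1 : a ^ 2 = b ^ 2) (hsq2 : b ^ 2 = c ^ 2)
    (hZ2 : a ^ 2 ∈ Subgroup.center G) (hZ3 : a ^ 3 ∈ Subgroup.center G) :
    Nonempty (G ≃* Multiplicative (ZMod 2) × Multiplicative (ZMod 6)) :=
  iso_Z2_times_Z6_of_central_powers_general horders ha
    (Set.encard_eq_three.2 ⟨_, _, _, hab, hac, hbc, hset⟩) (mem_of_sq_mem_of_cube_mem hZ2 hZ3)
end

section
/- Let G be a finite group with π_e(G) ⊆ {1,2,3,4,6} whose cyclic subgroups of order 6 are exactly the three subgroups ⟨a⟩, ⟨b⟩, ⟨c⟩, where a, b, c have order 6 and a² = b² = c². If none of a³, b³, c³ lies in the center Z(G), then {a³, b³, c³} is a conjugacy class of G, and the centralizer C_G(a³) has index 3 in G. -/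
/-!
If `g` has order `2n`, then `g ^ n` is the unique involution of `⟨g⟩`, so it depends only on the
subgroup `⟨g⟩`. Hence the `n`-th powers of the elements of order `2n` form a conjugation-invariant
set `S` with at most one element for each cyclic subgroup of order `2n`. If `S` has at most three
elements, none of them central, then `S` is a single conjugacy class, because two distinct classes
would each have at least two elements. The centralizer of a point of `S` then has index `|S|`.
-/

section Orbits

variable {G X : Type*} [Group G] [MulAction G X]

theorem orbit_eq_of_encard_le_three {S : Set X} (orbit_subset : ∀ x ∈ S, MulAction.orbit G x ⊆ S)
    (disjoint_fixed : Disjoint S (MulAction.fixedPoints G X)) (card_le : S.encard ≤ 3)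
    {x : X} (hx : x ∈ S) : MulAction.orbit G x = S := by
  have two_le_encard_orbit {y : X} (hy : y ∈ S) : 2 ≤ (MulAction.orbit G y).encard := by
    have nontrivial : (MulAction.orbit G y).Nontrivial := by
      rw [← Set.not_subsingleton_iff, MulAction.subsingleton_orbit_iff_mem_fixedPoints]
      exact Set.disjoint_left.mp disjoint_fixed hy
    exact Order.add_one_le_of_lt (Set.one_lt_encard_iff_nontrivial.mpr nontrivial)
  refine (orbit_subset x hx).antisymm fun y hy ↦ ?_
  rcases MulAction.orbit.eq_or_disjoint (G := G) x y with orbit_eq | orbit_disjoint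
  · exact orbit_eq ▸ MulAction.mem_orbit_self y
  · have four_le_three : (4 : ℕ∞) ≤ 3 := calc
      (4 : ℕ∞) = 2 + 2 := by norm_num
      _ ≤ (MulAction.orbit G x).encard + (MulAction.orbit G y).encard :=
        add_le_add (two_le_encard_orbit hx) (two_le_encard_orbit hy)
      _ = (MulAction.orbit G x ∪ MulAction.orbit G y).encard :=
        (Set.encard_union_eq orbit_disjoint).symm
      _ ≤ S.encard :=
        Set.encard_le_encard (Set.union_subset (orbit_subset x hx) (orbit_subset y hy))
      _ ≤ 3 := card_le
    exact absurd four_le_three (by decide)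

end Orbits

section ConjugacyClasses

variable {G : Type*} [Group G]

theorem orbit_conjAct_eq_setOf_isConj (x : G) :
    MulAction.orbit (ConjAct G) x = {y | IsConj x y} := by
  ext y
  rw [ConjAct.mem_orbit_conjAct, isConj_comm, Set.mem_ofPred_eq]

theorem index_centralizer_singleton (x : G) :
    (Subgroup.centralizer {x}).index = {y | IsConj x y}.ncard := by
  rw [← orbit_conjAct_eq_setOf_isConj, ← MulAction.index_stabilizer,
    ConjAct.stabilizer_eq_centralizer]
  rfl

theorem eq_setOf_isConj_of_encard_le_three {S : Set G}
    (isConj_mem : ∀ x ∈ S, ∀ y, IsConj x y → y ∈ S)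
    (disjoint_center : Disjoint S (Subgroup.center G)) (card_le : S.encard ≤ 3)
    {x : G} (hx : x ∈ S) : S = {y | IsConj x y} := by
  rw [← orbit_conjAct_eq_setOf_isConj]
  refine (orbit_eq_of_encard_le_three (fun z hz ↦ ?_) ?_ card_le hx).symm
  · rw [orbit_conjAct_eq_setOf_isConj]
    exact isConj_mem z hz
  · rwa [ConjAct.fixedPoints_eq_center]

end ConjugacyClasses

section Powers

variable {G : Type*} [Group G]

theorem eq_of_sq_eq_of_odd_pow_eq {a b : G} {n : ℕ} (hn : Odd n) (sq_eq : a ^ 2 = b ^ 2)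
    (pow_eq : a ^ n = b ^ n) : a = b := by
  obtain ⟨k, rfl⟩ := hn
  rw [pow_succ, pow_succ, pow_mul, pow_mul, sq_eq] at pow_eq
  exact mul_left_cancel pow_eq

theorem pow_eq_pow_of_zpowers_eq {g h : G} {n : ℕ} (hg : orderOf g = 2 * n)
    (zpowers_eq : Subgroup.zpowers g = Subgroup.zpowers h) : g ^ n = h ^ n := by
  have hh : orderOf h = 2 * n := by rw [← Nat.card_zpowers, ← zpowers_eq, Nat.card_zpowers, hg]
  have pow_two_mul : g ^ (2 * n) = 1 := hg ▸ pow_orderOf_eq_one g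
  obtain ⟨k, rfl⟩ := Subgroup.mem_zpowers_iff.mp (zpowers_eq ▸ Subgroup.mem_zpowers h)
  have zpow_even_pow (m : ℤ) : (g ^ (2 * m)) ^ n = 1 := by
    rw [← zpow_natCast, ← zpow_mul, show 2 * m * n = (2 * n : ℕ) * m by push_cast; ring,
      zpow_mul, zpow_natCast, pow_two_mul, one_zpow]
  obtain ⟨m, rfl | rfl⟩ := Int.even_or_odd' k
  · have dvd : 2 * n ∣ n := hh ▸ orderOf_dvd_of_pow_eq_one (zpow_even_pow m)
    obtain rfl : n = 0 := n.eq_zero_or_pos.resolve_right fun hn ↦ by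
      have := Nat.le_of_dvd hn dvd
      omega
    rw [pow_zero, pow_zero]
  · rw [zpow_add_one, ((Commute.refl g).zpow_left _).mul_pow, zpow_even_pow, one_mul]

theorem mem_image_pow_of_isConj {m n : ℕ} {x y : G} (hx : x ∈ (· ^ n) '' {g : G | orderOf g = m})
    (hxy : IsConj x y) : y ∈ (· ^ n) '' {g : G | orderOf g = m} := by
  obtain ⟨g, hg, rfl⟩ := hx
  obtain ⟨u, rfl⟩ := isConj_iff.mp hxy
  exact ⟨u * g * u⁻¹, ((MulAut.conj u).orderOf_eq g).trans hg, conj_pow⟩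

theorem image_pow_eq_of_isCyclic_card_eq {n : ℕ} {T : Set G}
    (hT : {H : Subgroup G | IsCyclic H ∧ Nat.card H = 2 * n} = Subgroup.zpowers '' T) :
    (· ^ n) '' {g : G | orderOf g = 2 * n} = (· ^ n) '' T := by
  apply Set.Subset.antisymm
  · rintro _ ⟨g, hg, rfl⟩
    have zpowers_mem : Subgroup.zpowers g ∈ Subgroup.zpowers '' T :=
      hT.subset ⟨inferInstance, (Nat.card_zpowers g).trans hg⟩
    obtain ⟨t, ht, zpowers_eq⟩ := zpowers_mem
    exact ⟨t, ht, (pow_eq_pow_of_zpowers_eq hg zpowers_eq.symm).symm⟩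
  · refine Set.image_mono fun t ht ↦ ?_
    exact (Nat.card_zpowers t).symm.trans (hT.superset ⟨t, ht, rfl⟩).2

end Powers

theorem conjugacy_class_of_noncentral_cubes_general
    {G : Type*} [Group G] {a b c : G} {n : ℕ} (hn : Odd n)
    (hab : Subgroup.zpowers a ≠ Subgroup.zpowers b)
    (hac : Subgroup.zpowers a ≠ Subgroup.zpowers c)
    (hbc : Subgroup.zpowers b ≠ Subgroup.zpowers c)
    (hset : {H : Subgroup G | IsCyclic H ∧ Nat.card H = 2 * n} =
      {Subgroup.zpowers a, Subgroup.zpowers b, Subgroup.zpowers c})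
    (hsq1 : a ^ 2 = b ^ 2) (hsq2 : b ^ 2 = c ^ 2)
    (hZa : a ^ n ∉ Subgroup.center G)
    (hZb : b ^ n ∉ Subgroup.center G)
    (hZc : c ^ n ∉ Subgroup.center G) :
    ({a ^ n, b ^ n, c ^ n} : Set G) = {y : G | IsConj (a ^ n) y} ∧
    (Subgroup.centralizer {a ^ n}).index = 3 := by
  have pow_ne {x y : G} (hxy : Subgroup.zpowers x ≠ Subgroup.zpowers y) (sq_eq : x ^ 2 = y ^ 2) :
      x ^ n ≠ y ^ n :=
    fun pow_eq ↦ hxy (congrArg _ (eq_of_sq_eq_of_odd_pow_eq hn sq_eq pow_eq))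
  have encard_eq : ({a ^ n, b ^ n, c ^ n} : Set G).encard = 3 :=
    Set.encard_eq_three.mpr
      ⟨_, _, _, pow_ne hab hsq1, pow_ne hac (hsq1.trans hsq2), pow_ne hbc hsq2, rfl⟩
  have image_eq : (· ^ n) '' {g : G | orderOf g = 2 * n} = {a ^ n, b ^ n, c ^ n} := by
    have hset_image : {H : Subgroup G | IsCyclic H ∧ Nat.card H = 2 * n} =
        Subgroup.zpowers '' {a, b, c} := by
      simpa only [Set.image_insert_eq, Set.image_singleton] using hset
    simpa only [Set.image_insert_eq, Set.image_singleton] using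
      image_pow_eq_of_isCyclic_card_eq hset_image
  have class_eq : ({a ^ n, b ^ n, c ^ n} : Set G) = {y : G | IsConj (a ^ n) y} := by
    refine eq_setOf_isConj_of_encard_le_three ?_ ?_ encard_eq.le (Set.mem_insert _ _)
    · exact image_eq ▸ fun _ hx _ hxy ↦ mem_image_pow_of_isConj hx hxy
    · rw [Set.disjoint_left]
      rintro _ (rfl | rfl | rfl) <;> assumption
  refine ⟨class_eq, ?_⟩
  rw [index_centralizer_singleton, ← class_eq, Set.ncard_def, encard_eq]
  rfl

/-- Let `G` be a finite group with `π_e(G) ⊆ {1,2,3,4,6}` whose cyclic subgroups of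
order 6 are exactly `⟨a⟩, ⟨b⟩, ⟨c⟩`, where `a, b, c` have order 6 and `a² = b² = c²`.
If none of `a³, b³, c³` lies in the center of `G`, then `{a³, b³, c³}` is a conjugacy
class of `G` and the centralizer of `a³` has index 3 in `G`. -/
theorem conjugacy_class_of_noncentral_cubes
    (G : Type) [Group G] [Finite G] (a b c : G)
    (horders : ∀ g : G, orderOf g ∈ ({1, 2, 3, 4, 6} : Set ℕ))
    (ha : orderOf a = 6) (hb : orderOf b = 6) (hc : orderOf c = 6)
    (hab : Subgroup.zpowers a ≠ Subgroup.zpowers b)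
    (hac : Subgroup.zpowers a ≠ Subgroup.zpowers c)
    (hbc : Subgroup.zpowers b ≠ Subgroup.zpowers c)
    (hset : {H : Subgroup G | IsCyclic H ∧ Nat.card H = 6} =
      {Subgroup.zpowers a, Subgroup.zpowers b, Subgroup.zpowers c})
    (hsq1 : a ^ 2 = b ^ 2) (hsq2 : b ^ 2 = c ^ 2)
    (hZa : a ^ 3 ∉ Subgroup.center G)
    (hZb : b ^ 3 ∉ Subgroup.center G)
    (hZc : c ^ 3 ∉ Subgroup.center G) :
    ({a ^ 3, b ^ 3, c ^ 3} : Set G) = {y : G | IsConj (a ^ 3) y} ∧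
    (Subgroup.centralizer {a ^ 3}).index = 3 := by
  exact conjugacy_class_of_noncentral_cubes_general (n := 3) (by decide) hab hac hbc hset
    hsq1 hsq2 hZa hZb hZc
end

section
/- Let G be a finite group with π_e(G) = {1, 2, 4, 8} that has exactly one cyclic subgroup of order 8. Then |G| = 8 or |G| = 16. -/
/-!
Let `x` have order `2 ^ n`, where `n = m + 2`, and let `C = ⟨x⟩` be the unique cyclic subgroup of
that order in a group of exponent dividing `2 ^ n`. Uniqueness makes `C` normal, so every `y` acts
on it by `y x y⁻¹ = x ^ k` for some `k`. If `k ≡ 1 mod 4` and `y` does not have order `2 ^ n`, then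
`(x y) ^ (2 ^ (n - 1)) = x ^ (1 + k + ⋯ + k ^ (2 ^ (n - 1) - 1))`, whose exponent is an odd multiple
of `2 ^ (n - 1)`; hence `x y` has order `2 ^ n`, so `x y ∈ C` and `y ∈ C`. Since `k ≡ 1 mod 4` means
exactly that `y` commutes with the element `z = x ^ (2 ^ m)` of order `4`, the centralizer of `z`
is `C`. The only possible conjugates of `z` are `z` and `z⁻¹`, so `C` has index at most `2`.
-/

open Finset Subgroup

theorem geom_sum_two_pow_modEq {k : ℕ} (hk : k ≡ 1 [MOD 4]) (m : ℕ) :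
    ∑ i ∈ range (2 ^ m), k ^ i ≡ 2 ^ m [MOD 2 ^ (m + 1)] := by
  induction m with
  | zero => simp [Nat.ModEq.refl]
  | succ m ih =>
    set S := ∑ i ∈ range (2 ^ m), k ^ i
    have sum_succ : ∑ i ∈ range (2 ^ (m + 1)), k ^ i = S * (k ^ 2 ^ m + 1) := by
      rw [pow_succ, mul_two, sum_range_add]
      simp only [pow_add, ← mul_sum]
      ring
    have pow_add_one : k ^ 2 ^ m + 1 ≡ 2 [MOD 4] := by simpa using (hk.pow (2 ^ m)).add_right 1
    have two_pow_dvd : 2 ^ m ∣ S :=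
      (ih.dvd_iff (pow_dvd_pow 2 m.le_succ)).mpr dvd_rfl
    calc ∑ i ∈ range (2 ^ (m + 1)), k ^ i = S * (k ^ 2 ^ m + 1) := sum_succ
      _ ≡ S * 2 [MOD 2 ^ (m + 1 + 1)] :=
        (pow_add_one.mul_left' S).of_dvd <| by
          simpa [pow_succ, mul_assoc] using mul_dvd_mul_right two_pow_dvd 4
      _ ≡ 2 ^ (m + 1) [MOD 2 ^ (m + 1 + 1)] := ih.mul_right' 2

section Monoid

variable {M : Type*} [Monoid M] {x y : M} {k : ℕ}

theorem mul_pow_of_semiconjBy_pow (h : SemiconjBy y x (x ^ k)) (m : ℕ) :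
    (x * y) ^ m = x ^ (∑ i ∈ range m, k ^ i) * y ^ m := by
  induction m with
  | zero => simp
  | succ m ih =>
    rw [pow_succ', ih, geom_sum_succ, mul_assoc, ← mul_assoc y, (h.pow_right _).eq, pow_succ' y,
      ← pow_mul, pow_succ' x]
    simp only [mul_assoc]

theorem mul_pow_two_pow_of_semiconjBy_pow {m : ℕ} (h : SemiconjBy y x (x ^ k))
    (hk : k ≡ 1 [MOD 4]) (hx : x ^ 2 ^ (m + 1) = 1) :
    (x * y) ^ 2 ^ m = x ^ 2 ^ m * y ^ 2 ^ m := by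
  rw [mul_pow_of_semiconjBy_pow h, pow_eq_pow_of_modEq (geom_sum_two_pow_modEq hk m) hx]

end Monoid

section Group

variable {G : Type*} [Group G] {x y z w : G} {m n : ℕ}

theorem pow_eq_one_of_orderOf_subset_divisors
    (h : {k : ℕ | ∃ g : G, orderOf g = k} ⊆ n.divisors) (g : G) : g ^ n = 1 :=
  orderOf_dvd_iff_pow_eq_one.mp (Nat.dvd_of_mem_divisors (h ⟨g, rfl⟩))

theorem eq_or_eq_inv_of_mem_zpowers_of_orderOf_eq_four (hz : orderOf z = 4) (hw : orderOf w = 4)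
    (hmem : w ∈ zpowers z) : w = z ∨ w = z⁻¹ := by
  obtain ⟨k, hk, rfl⟩ : ∃ k < 4, z ^ k = w := by
    have hfin : IsOfFinOrder z := orderOf_pos_iff.mp (by lia)
    classical simpa [hz] using hfin.mem_zpowers_iff_mem_range_orderOf.mp hmem
  have pow_four : z ^ 4 = 1 := hz ▸ pow_orderOf_eq_one z
  interval_cases k
  · simp at hw
  · exact .inl (pow_one z)
  · have : orderOf (z ^ 2) ∣ 2 := orderOf_dvd_of_pow_eq_one (by rw [← pow_mul, pow_four])
    rw [hw] at this
    norm_num at this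
  · exact .inr (eq_inv_of_mul_eq_one_left (by rw [← pow_succ, pow_four]))

theorem index_centralizer_singleton_of_forall_conj_eq_or_eq_inv
    (h : ∀ g : G, g * z * g⁻¹ = z ∨ g * z * g⁻¹ = z⁻¹) :
    (centralizer {z}).index = 1 ∨ (centralizer {z}).index = 2 := by
  have semiconjBy_inv {g : G} (hg : g ∉ centralizer {z}) : SemiconjBy g z z⁻¹ := by
    rw [mem_centralizer_singleton_iff, ← mul_inv_eq_iff_eq_mul] at hg
    exact (h g).resolve_left hg ▸ SemiconjBy.conj_mk g z
  by_cases htop : centralizer {z} = ⊤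
  · exact .inl (index_eq_one.mpr htop)
  · obtain ⟨a, ha⟩ : ∃ a, a ∉ centralizer {z} := by simpa [eq_top_iff'] using htop
    refine .inr (index_eq_two_iff_exists_notMem_and.mpr ⟨a, ha, fun b => ?_⟩)
    refine or_iff_not_imp_right.mpr fun hb => ?_
    have : SemiconjBy (b * a) z z := by
      simpa using (semiconjBy_inv hb).inv_right.mul_left (semiconjBy_inv ha)
    exact mem_centralizer_singleton_iff.mpr this

theorem exists_orderOf_eq_of_unique_cyclic_subgroup
    (hunique : {H : Subgroup G | IsCyclic H ∧ Nat.card H = n}.ncard = 1) :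
    ∃ x : G, orderOf x = n ∧ ∀ g : G, orderOf g = n → g ∈ zpowers x := by
  obtain ⟨H, hH⟩ := Set.ncard_eq_one.mp hunique
  have hmem : H ∈ {H : Subgroup G | IsCyclic H ∧ Nat.card H = n} := hH ▸ rfl
  obtain ⟨x, rfl⟩ := H.isCyclic_iff_exists_zpowers_eq_top.mp hmem.1
  refine ⟨x, Nat.card_zpowers x ▸ hmem.2, fun g hg => ?_⟩
  have : zpowers g ∈ {H : Subgroup G | IsCyclic H ∧ Nat.card H = n} :=
    ⟨inferInstance, Nat.card_zpowers g ▸ hg⟩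
  rw [hH] at this
  exact this ▸ mem_zpowers g

theorem exists_semiconjBy_pow_of_forall_orderOf_eq (hx : IsOfFinOrder x)
    (hmem : ∀ g : G, orderOf g = orderOf x → g ∈ zpowers x) (y : G) :
    ∃ k : ℕ, SemiconjBy y x (x ^ k) := by
  have : y * x * y⁻¹ ∈ zpowers x := hmem _ ((MulAut.conj y).orderOf_eq x)
  obtain ⟨k, hk⟩ := hx.mem_powers_iff_mem_zpowers.mpr this
  exact ⟨k, by simpa only [hk] using SemiconjBy.conj_mk y x⟩

theorem mem_zpowers_of_semiconjBy_pow {k : ℕ} (hx : orderOf x = 2 ^ (m + 1))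
    (hexp : ∀ g : G, g ^ 2 ^ (m + 1) = 1)
    (hmem : ∀ g : G, orderOf g = orderOf x → g ∈ zpowers x)
    (h : SemiconjBy y x (x ^ k)) (hk : k ≡ 1 [MOD 4]) : y ∈ zpowers x := by
  have mem_of_pow_ne_one {g : G} (hg : g ^ 2 ^ m ≠ 1) : g ∈ zpowers x :=
    hmem g (by rw [hx, orderOf_eq_prime_pow hg (hexp g)])
  by_cases hy : y ^ 2 ^ m = 1
  · have hxy : (x * y) ^ 2 ^ m ≠ 1 := by
      rw [mul_pow_two_pow_of_semiconjBy_pow h hk (hexp x), hy, mul_one]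
      exact pow_ne_one_of_lt_orderOf (by positivity)
        (hx ▸ Nat.pow_lt_pow_right one_lt_two m.lt_succ_self)
    exact (Subgroup.mul_mem_cancel_left _ (mem_zpowers x)).mp (mem_of_pow_ne_one hxy)
  · exact mem_of_pow_ne_one hy

section OrderTwoPow

variable (hx : orderOf x = 2 ^ (m + 2)) (hmem : ∀ g : G, orderOf g = orderOf x → g ∈ zpowers x)

include hx

theorem orderOf_pow_two_pow_eq_four : orderOf (x ^ 2 ^ m) = 4 := by
  rw [orderOf_pow_of_dvd (by positivity) (hx ▸ pow_dvd_pow 2 (by lia)), hx,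
    Nat.pow_div (by lia) two_pos]
  norm_num

include hmem

theorem centralizer_pow_two_pow_eq_zpowers (hexp : ∀ g : G, g ^ 2 ^ (m + 2) = 1) :
    centralizer {x ^ 2 ^ m} = zpowers x := by
  refine le_antisymm (fun y hy => ?_) ?_
  · have hfin : IsOfFinOrder x := orderOf_pos_iff.mp (hx ▸ by positivity)
    obtain ⟨k, hk⟩ := exists_semiconjBy_pow_of_forall_orderOf_eq hfin hmem y
    have pow_eq : (x ^ 2 ^ m) ^ k = (x ^ 2 ^ m) ^ 1 := by
      have := (hk.pow_right (2 ^ m)).eq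
      rw [mem_centralizer_singleton_iff.mp hy] at this
      rw [pow_one, pow_right_comm, mul_right_cancel this]
    rw [pow_eq_pow_iff_modEq, orderOf_pow_two_pow_eq_four hx] at pow_eq
    exact mem_zpowers_of_semiconjBy_pow hx hexp hmem hk pow_eq
  · rw [zpowers_le, mem_centralizer_singleton_iff]
    exact (Commute.self_pow x _).eq

theorem conj_pow_two_pow_eq_or_eq_inv (g : G) :
    g * x ^ 2 ^ m * g⁻¹ = x ^ 2 ^ m ∨ g * x ^ 2 ^ m * g⁻¹ = (x ^ 2 ^ m)⁻¹ := by
  have hz := orderOf_pow_two_pow_eq_four hx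
  have hfin : IsOfFinOrder x := orderOf_pos_iff.mp (hx ▸ by positivity)
  refine eq_or_eq_inv_of_mem_zpowers_of_orderOf_eq_four hz
    (((MulAut.conj g).orderOf_eq _).trans hz) ?_
  obtain ⟨k, hk⟩ := exists_semiconjBy_pow_of_forall_orderOf_eq hfin hmem g
  rw [(hk.pow_right _).eq, mul_inv_cancel_right, pow_right_comm]
  exact pow_mem (mem_zpowers _) k

end OrderTwoPow

theorem card_eq_8_or_16_of_unique_cyclic_subgroup_of_order_eight_general (hn : 2 ≤ n)
    (hexp : ∀ g : G, g ^ 2 ^ n = 1)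
    (hunique : {H : Subgroup G | IsCyclic H ∧ Nat.card H = 2 ^ n}.ncard = 1) :
    Nat.card G = 2 ^ n ∨ Nat.card G = 2 ^ (n + 1) := by
  obtain ⟨m, rfl⟩ := Nat.exists_eq_add_of_le' hn
  obtain ⟨x, hx, hmem⟩ := exists_orderOf_eq_of_unique_cyclic_subgroup hunique
  rw [← hx] at hmem
  have index_eq : (zpowers x).index = 1 ∨ (zpowers x).index = 2 :=
    centralizer_pow_two_pow_eq_zpowers hx hmem hexp ▸
      index_centralizer_singleton_of_forall_conj_eq_or_eq_inv
        (conj_pow_two_pow_eq_or_eq_inv hx hmem)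
  rw [← (zpowers x).card_mul_index, Nat.card_zpowers, hx, pow_succ 2 (m + 2)]
  exact index_eq.imp (fun h => by rw [h, mul_one]) (fun h => by rw [h])

end Group

/-- Let `G` be a finite group with `π_e(G) = {1, 2, 4, 8}` that has exactly one cyclic
subgroup of order 8. Then `|G| = 8` or `|G| = 16`. -/
theorem card_eq_8_or_16_of_unique_cyclic_subgroup_of_order_eight
    (G : Type) [Group G] [Finite G]
    (horders : {n : ℕ | ∃ g : G, orderOf g = n} = ({1, 2, 4, 8} : Set ℕ))
    (hunique : {H : Subgroup G | IsCyclic H ∧ Nat.card H = 8}.ncard = 1) :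
    Nat.card G = 8 ∨ Nat.card G = 16 := by
  have hdiv : {n : ℕ | ∃ g : G, orderOf g = n} ⊆ Nat.divisors (2 ^ 3) := by
    simp [horders, Set.subset_def]
  exact card_eq_8_or_16_of_unique_cyclic_subgroup_of_order_eight_general (n := 3) (by norm_num)
    (pow_eq_one_of_orderOf_subset_divisors hdiv) hunique
end

section
/- There is no finite group G of order 32 such that π_e(G) = {1, 2, 4, 8} and G has exactly one cyclic subgroup of order 8. -/
/-!
Let `p` be prime and let `G` have exponent dividing `p ^ (n + 2)`. Suppose that every element of
order `p ^ (n + 2)` lies in `A = ⟨a⟩`, where `a` has that order; then `A` is normal. Let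
`B = ⟨a ^ p ^ n⟩` be the subgroup of `A` of order `p ^ 2`. If `x` centralizes `B` and `x ^ p ∈ A`,
then `(a * x) ^ p ^ (n + 1) = a ^ p ^ (n + 1) * x ^ p ^ (n + 1)`. Since `a ^ p ^ (n + 1) ≠ 1`, one
of `x` and `a * x` has order `p ^ (n + 2)`, so `x ∈ A`. Hence the centralizer of `B` is contained
in `A`, and the index of `A`, a power of `p`, divides `φ (p ^ 2) = p * (p - 1)`. It follows that
`|G| ∣ p ^ (n + 3)`, which for `p = 2`, `n = 1` excludes order 32.
-/

section

open Subgroup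

variable {G : Type*} [Group G]

theorem relIndex_centralizer_normalizer_dvd_totient (C : Subgroup G) [IsCyclic C] [Finite C] :
    (centralizer (C : Set G)).relIndex (normalizer (C : Set G)) ∣ (Nat.card C).totient := by
  rw [← IsCyclic.card_mulAut, relIndex, ← normalizerMonoidHom_ker, index_ker]
  exact card_subgroup_dvd_card _

theorem normal_zpowers_of_forall_orderOf_eq {a : G}
    (h : ∀ g, orderOf g = orderOf a → g ∈ zpowers a) : (zpowers a).Normal where
  conj_mem := by
    rintro _ ⟨k, rfl⟩ g
    have hconj : orderOf (g * a * g⁻¹) = orderOf a := (MulAut.conj g).orderOf_eq a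
    simpa only [conj_zpow] using zpow_mem (h _ hconj) k

theorem normal_zpowers_pow {a : G} [(zpowers a).Normal] (k : ℕ) : (zpowers (a ^ k)).Normal where
  conj_mem := by
    rintro _ ⟨m, rfl⟩ g
    obtain ⟨e, he : a ^ e = g * a * g⁻¹⟩ := Normal.conj_mem ‹_› a (mem_zpowers a) g
    have hconj : (a ^ k) ^ e = g * a ^ k * g⁻¹ := by
      rw [← conj_pow, ← he, ← zpow_natCast, ← zpow_natCast, zpow_comm]
    simp only [← conj_zpow, ← hconj]
    exact zpow_mem (zpow_mem (mem_zpowers _) e) m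

section

variable {A : Subgroup G} [A.Normal] {a x : G} {k : ℕ}

theorem mul_pow_mul_inv_pow_mem (ha : a ∈ A) (i : ℕ) : (a * x) ^ i * (x ^ i)⁻¹ ∈ A := by
  rw [← QuotientGroup.eq_one_iff] at ha ⊢
  simp [ha]

theorem mul_pow_mul_inv_pow_pow [IsMulCommutative A] (ha : a ∈ A) (hx : Commute x (a ^ k))
    (i : ℕ) : ((a * x) ^ i * (x ^ i)⁻¹) ^ k = a ^ (i * k) := by
  induction i with
  | zero => simp
  | succ i ih =>
    set y := (a * x) ^ i * (x ^ i)⁻¹ with hy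
    have hyA : x * y * x⁻¹ ∈ A := Normal.conj_mem ‹_› y (mul_pow_mul_inv_pow_mem ha i) x
    calc ((a * x) ^ (i + 1) * (x ^ (i + 1))⁻¹) ^ k
        = (a * (x * y * x⁻¹)) ^ k := by rw [hy, pow_succ', pow_succ]; group
      _ = a ^ k * (x * y ^ k * x⁻¹) := by
        rw [(show Commute a (x * y * x⁻¹) from setLike_mul_comm ha hyA).mul_pow, conj_pow]
      _ = a ^ k * a ^ (i * k) := by
        rw [ih, mul_comm i, pow_mul, (hx.pow_right i).eq, mul_inv_cancel_right]
      _ = a ^ ((i + 1) * k) := by rw [← pow_add]; ring_nf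

theorem mul_pow_mul_of_commute_pow [IsMulCommutative A] (ha : a ∈ A) (hx : Commute x (a ^ k))
    {i : ℕ} (hxi : x ^ i ∈ A) : (a * x) ^ (i * k) = a ^ (i * k) * x ^ (i * k) := by
  have hcomm : Commute ((a * x) ^ i * (x ^ i)⁻¹) (x ^ i) :=
    setLike_mul_comm (mul_pow_mul_inv_pow_mem ha i) hxi
  rw [← mul_pow_mul_inv_pow_pow ha hx, pow_mul x, ← hcomm.mul_pow, inv_mul_cancel_right, pow_mul]

end

section

variable {p n : ℕ} [Fact p.Prime] {a : G}

theorem mem_zpowers_of_pow_prime_mem (hG : Monoid.exponent G ∣ p ^ (n + 2))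
    (ha : orderOf a = p ^ (n + 2)) (hmem : ∀ g, orderOf g = orderOf a → g ∈ zpowers a)
    {x : G} (hcomm : Commute x (a ^ p ^ n)) (hxp : x ^ p ∈ zpowers a) : x ∈ zpowers a := by
  have : (zpowers a).Normal := normal_zpowers_of_forall_orderOf_eq hmem
  have hpow {g : G} (hg : g ∉ zpowers a) : g ^ (p * p ^ n) = 1 := by
    contrapose! hg
    rw [← pow_succ'] at hg
    exact hmem g <| ha ▸ orderOf_eq_prime_pow hg (Monoid.exponent_dvd_iff_forall_pow_eq_one.1 hG g)
  by_contra hx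
  have hax : a * x ∉ zpowers a := by rwa [mul_mem_cancel_left (mem_zpowers a)]
  have hone : a ^ (p * p ^ n) = 1 := by
    simpa only [hpow hax, hpow hx, mul_one, eq_comm] using
      mul_pow_mul_of_commute_pow (mem_zpowers a) hcomm hxp
  rw [← pow_succ', ← orderOf_dvd_iff_pow_eq_one, ha,
    Nat.pow_dvd_pow_iff_le_right (Fact.out : p.Prime).one_lt] at hone
  lia

theorem centralizer_zpowers_pow_le_zpowers (hG : Monoid.exponent G ∣ p ^ (n + 2))
    (ha : orderOf a = p ^ (n + 2)) (hmem : ∀ g, orderOf g = orderOf a → g ∈ zpowers a) :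
    centralizer (zpowers (a ^ p ^ n) : Set G) ≤ zpowers a := by
  intro x hx
  have hcomm : Commute x (a ^ p ^ n) := (hx _ (mem_zpowers _)).symm
  have hdescent (m : ℕ) (hm : x ^ p ^ m ∈ zpowers a) : x ∈ zpowers a := by
    induction m with
    | zero => simpa using hm
    | succ m ih =>
      rw [pow_succ, pow_mul] at hm
      exact ih (mem_zpowers_of_pow_prime_mem hG ha hmem (hcomm.pow_left _) hm)
  apply hdescent (n + 2)
  rw [Monoid.exponent_dvd_iff_forall_pow_eq_one.1 hG x]
  exact one_mem _

theorem index_zpowers_dvd_of_exponent_dvd (hG : Monoid.exponent G ∣ p ^ (n + 2))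
    (ha : orderOf a = p ^ (n + 2)) (hmem : ∀ g, orderOf g = orderOf a → g ∈ zpowers a) :
    (zpowers a).index ∣ p := by
  have hp : p.Prime := Fact.out
  have : (zpowers a).Normal := normal_zpowers_of_forall_orderOf_eq hmem
  let B := zpowers (a ^ p ^ n)
  have : B.Normal := normal_zpowers_pow _
  have hB : Nat.card B = p ^ 2 := by
    have hdiv : p ^ n ∣ orderOf a := ha ▸ pow_dvd_pow p (Nat.le_add_right n 2)
    rw [Nat.card_zpowers, orderOf_pow_of_dvd (pow_ne_zero _ hp.ne_zero) hdiv, ha,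
      Nat.pow_div (Nat.le_add_right n 2) hp.pos, Nat.add_sub_cancel_left]
  have : Finite B := Nat.finite_of_card_ne_zero (hB ▸ pow_ne_zero 2 hp.ne_zero)
  have hdvd : (zpowers a).index ∣ p * (p - 1) := by
    have := relIndex_centralizer_normalizer_dvd_totient B
    rw [hB, Nat.totient_prime_pow_succ hp, pow_one, B.normalizer_eq_top, relIndex_top_right] at this
    exact (index_dvd_of_le (centralizer_zpowers_pow_le_zpowers hG ha hmem)).trans this
  have : (zpowers a).FiniteIndex :=
    ⟨ne_zero_of_dvd_ne_zero (mul_ne_zero hp.ne_zero (Nat.sub_ne_zero_of_lt hp.one_lt)) hdvd⟩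
  have hpG : IsPGroup p G := .of_exponent_dvd_pow hG
  obtain ⟨j, hj⟩ := hpG.index (zpowers a)
  rw [hj] at hdvd ⊢
  refine Nat.Coprime.dvd_of_dvd_mul_right (Nat.Coprime.pow_left j ?_) hdvd
  exact (Nat.coprime_self_sub_right hp.one_le).2 (Nat.coprime_one_right p)

end

end

theorem no_group_of_order_32_with_unique_cyclic_subgroup_of_order_eight_general
    {G : Type*} [Group G] {p n : ℕ} [Fact p.Prime] (hG : Monoid.exponent G ∣ p ^ (n + 2))
    (huniq : ∃! H : Subgroup G, IsCyclic H ∧ Nat.card H = p ^ (n + 2)) :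
    Nat.card G ∣ p ^ (n + 3) := by
  obtain ⟨A, ⟨hcyc, hA⟩, hunique⟩ := huniq
  obtain ⟨a, rfl⟩ := (Subgroup.isCyclic_iff_exists_zpowers_eq_top A).1 hcyc
  rw [Nat.card_zpowers] at hA
  have hmem (g : G) (hg : orderOf g = orderOf a) : g ∈ Subgroup.zpowers a :=
    hunique (Subgroup.zpowers g) ⟨inferInstance, by rw [Nat.card_zpowers, hg, hA]⟩ ▸
      Subgroup.mem_zpowers g
  rw [← (Subgroup.zpowers a).card_mul_index, Nat.card_zpowers, hA, pow_succ p (n + 2)]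
  exact mul_dvd_mul_left _ (index_zpowers_dvd_of_exponent_dvd hG hA hmem)

/-- There is no finite group `G` of order 32 such that `π_e(G) = {1, 2, 4, 8}` and `G`
has exactly one cyclic subgroup of order 8. -/
theorem no_group_of_order_32_with_unique_cyclic_subgroup_of_order_eight :
    ∀ (G : Type) [Group G] [Finite G], Nat.card G = 32 →
      {n : ℕ | ∃ g : G, orderOf g = n} = ({1, 2, 4, 8} : Set ℕ) →
      {H : Subgroup G | IsCyclic H ∧ Nat.card H = 8}.ncard ≠ 1 := by
  intro G _ _ hcard horders huniq
  have hexp : Monoid.exponent G ∣ 2 ^ (1 + 2) := Monoid.exponent_dvd.2 fun g ↦ by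
    have hg : orderOf g ∈ ({1, 2, 4, 8} : Set ℕ) := horders ▸ ⟨g, rfl⟩
    rcases hg with h | h | h | h <;> rw [h] <;> norm_num
  have hdvd := no_group_of_order_32_with_unique_cyclic_subgroup_of_order_eight_general hexp
    (Set.singleton_iff_unique_mem.1 (Set.ncard_eq_one.1 huniq))
  norm_num [hcard] at hdvd
end

section
/- Let G be a finite group with π_e(G) = {1, 2, 4, 8} having exactly one cyclic subgroup of order 8, and let g ∈ G be an element of order 8. Then the centralizer of g in G equals ⟨g⟩, i.e., C_G(g) = ⟨g⟩. -/
/-!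
Let `g` have order `p ^ n` in a group of exponent dividing `p ^ n`. If `h` commutes with `g`, then
either `h` also has order `p ^ n`, or its order is a smaller power of `p` and then `h * g` has
order `p ^ n`. When only one cyclic subgroup of order `p ^ n` exists, it is `⟨g⟩`, and it contains
every element of order `p ^ n`; in both cases `h ∈ ⟨g⟩`.
-/

section

variable {G : Type*} [Group G] {g h : G} {p n : ℕ}

theorem mem_zpowers_of_orderOf_eq_of_subsingleton
    (hunique : {H : Subgroup G | IsCyclic H ∧ Nat.card H = n}.Subsingleton)
    (hg : orderOf g = n) (hh : orderOf h = n) : h ∈ Subgroup.zpowers g := by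
  have zpowers_eq : Subgroup.zpowers h = Subgroup.zpowers g :=
    hunique ⟨inferInstance, (Nat.card_zpowers h).trans hh⟩
      ⟨inferInstance, (Nat.card_zpowers g).trans hg⟩
  exact zpowers_eq ▸ Subgroup.mem_zpowers h

theorem orderOf_mul_eq_prime_pow_of_commute [Fact p.Prime] {k : ℕ} (hcomm : Commute h g)
    (hkn : k < n) (hh : orderOf h = p ^ k) (hg : orderOf g = p ^ n) :
    orderOf (h * g) = p ^ n := by
  have hp : p.Prime := Fact.out
  rw [← hg]
  refine hcomm.orderOf_mul_eq_right_of_forall_prime_mul_dvd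
    (orderOf_pos_iff.mp (hg ▸ pow_pos hp.pos n)) fun q hq hqh ↦ ?_
  obtain rfl : q = p := (Nat.prime_dvd_prime_iff_eq hq hp).mp (hq.dvd_of_dvd_pow (hh ▸ hqh))
  rw [hh, hg, ← pow_succ']
  exact pow_dvd_pow q hkn

theorem centralizer_eq_zpowers_of_unique_cyclic_subgroup_of_order_eight_general [Fact p.Prime]
    (hexp : Monoid.exponent G ∣ p ^ n)
    (hunique : {H : Subgroup G | IsCyclic H ∧ Nat.card H = p ^ n}.Subsingleton)
    (hg : orderOf g = p ^ n) :
    Subgroup.centralizer {g} = Subgroup.zpowers g := by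
  refine le_antisymm (fun h hh ↦ ?_)
    (Subgroup.zpowers_le.mpr (Subgroup.mem_centralizer_singleton_iff.mpr rfl))
  have hcomm : Commute h g := Subgroup.mem_centralizer_singleton_iff.mp hh
  obtain ⟨k, hkn, hk⟩ := (Nat.dvd_prime_pow Fact.out).mp (Monoid.exponent_dvd.mp hexp h)
  obtain rfl | hkn := hkn.eq_or_lt
  · exact mem_zpowers_of_orderOf_eq_of_subsingleton hunique hg hk
  · have mul_mem : h * g ∈ Subgroup.zpowers g :=
      mem_zpowers_of_orderOf_eq_of_subsingleton hunique hg
        (orderOf_mul_eq_prime_pow_of_commute hcomm hkn hk hg)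
    exact (Subgroup.mul_mem_cancel_right _ (Subgroup.mem_zpowers g)).mp mul_mem

end

/-- Let `G` be a finite group with `π_e(G) = {1, 2, 4, 8}` having exactly one cyclic
subgroup of order 8, and let `g ∈ G` be an element of order 8. Then `C_G(g) = ⟨g⟩`. -/
theorem centralizer_eq_zpowers_of_unique_cyclic_subgroup_of_order_eight
    (G : Type) [Group G] [Finite G]
    (horders : {n : ℕ | ∃ g : G, orderOf g = n} = ({1, 2, 4, 8} : Set ℕ))
    (hunique : {H : Subgroup G | IsCyclic H ∧ Nat.card H = 8}.ncard = 1)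
    (g : G) (hg : orderOf g = 8) :
    Subgroup.centralizer {g} = Subgroup.zpowers g := by
  have hexp : Monoid.exponent G ∣ 2 ^ 3 := Monoid.exponent_dvd.mpr fun x ↦ by
    have hx : orderOf x ∈ ({1, 2, 4, 8} : Set ℕ) := horders ▸ ⟨x, rfl⟩
    obtain hx | hx | hx | hx := hx <;> rw [hx] <;> norm_num
  obtain ⟨K, hK⟩ := Set.ncard_eq_one.mp hunique
  exact centralizer_eq_zpowers_of_unique_cyclic_subgroup_of_order_eight_general hexp
    (hK ▸ Set.subsingleton_singleton) hg
end
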